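/- arXiv:1801.06110 — 2 statements merged into one kernel-verified Lean document; each statement's English description precedes it below -/
import Mathlib

section
/- There exist a constant C > 0 and t₀ such that for every real t ≥ t₀ there is x₀ = x₀(t) with the following property: for all x ≥ x₀ and all real ξ > 1, the number of primes p ≤ x with |ω(p−1, t) − log log t| ≥ ξ·√(log log t) is at most C·π(x)/ξ². -/
/-!
The proof is Turán's second-moment argument. Write `L = log log t`, let `P` be the set of primes
below `t` and `M = ∏ q ∈ P, q`. For a prime `p`, `omegaLt (p - 1) t` counts the `q ∈ P` with
`p ≡ 1 [MOD q]`, so it depends only on the residue of `p` modulo `M`.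

* On the units of `ZMod M` the events `u ≡ 1` modulo `q` have density `1 / (q - 1)` and are
  pairwise independent, since the reduction maps `(ZMod M)ˣ → (ZMod d)ˣ` are surjective. Hence the
  second moment of the count about `L`, averaged over the units, is at most `μ + (μ - L) ^ 2` with
  `μ = ∑ q ∈ P, 1 / (q - 1)` (`second_moment_units`).
* Mertens' theorem in the form `μ = L + O(1)` (`mertens`) turns this bound into `O(L)`.
* To pass from units to primes it is enough to have an upper bound of the right order,
  `π(x; M, a) ≤ C π(x) / φ(M)` with `C` absolute and `x` large in terms of `M`
  (`prime_residue_le`); the few primes dividing `M` contribute a bounded amount.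
* Chebyshev's inequality then bounds the number of exceptional primes, uniformly in `ξ`.

The upper bound for `π(x; M, a)` is the easy half of the Wiener-Ikehara theorem (`tauberian`). If
a Dirichlet series with nonnegative coefficients `f n` equals `c / (s - 1)` plus a function
continuous on `Re s ≥ 1`, then integrating it against the Fejér kernel along the line
`Re s = 1 + ε` expresses a weighted sum of the `f n` over `n` close to `x`. The polar part is
`O(c)` uniformly in `ε` and `x` (`pole_bound`), and the continuous part tends to `0` as `x → ∞` by
the Riemann-Lebesgue lemma, so `∑ x/2 < n ≤ x, f n ≤ (C c + o(1)) x`. This is applied to the von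
Mangoldt function on a residue class, for which Mathlib provides the continuation to the closed
half-plane.
-/

/-- `ω(n, t)`: the number of distinct prime factors of `n` that are less than `t`. -/
noncomputable def omegaLt (n : ℕ) (t : ℝ) : ℕ :=
  (n.primeFactors.filter (fun q : ℕ => (q : ℝ) < t)).card

/-! ### The Fejér kernel -/

/-- The Fejér kernel, normalised by `fejer 0 = 1`: the Fourier transform of the tent function
`1 - |v|` on `[-1, 1]`, folded onto `[0, 1]` by symmetry. -/
noncomputable def fejer (u : ℝ) : ℝ := ∫ v in (0 : ℝ)..1, 2 * (1 - v) * Real.cos (u * v)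

lemma fejer_eq_integral (u : ℝ) :
    ∫ v in (-1 : ℝ)..1, ((1 - |v| : ℝ) : ℂ) * Complex.exp (Complex.I * u * v) = fejer u := by
  have hc : Continuous fun v : ℝ => ((1 - |v| : ℝ) : ℂ) * Complex.exp (Complex.I * u * v) := by
    fun_prop
  rw [← intervalIntegral.integral_add_adjacent_intervals
    (hc.intervalIntegrable (-1) 0) (hc.intervalIntegrable 0 1)]
  have h := intervalIntegral.integral_comp_neg (a := 0) (b := 1)
    (fun v : ℝ => ((1 - |v| : ℝ) : ℂ) * Complex.exp (Complex.I * u * v))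
  rw [neg_zero] at h
  have hc' : Continuous fun v : ℝ =>
      ((1 - |(-v)| : ℝ) : ℂ) * Complex.exp (Complex.I * u * (-v : ℝ)) := hc.comp continuous_neg
  rw [← h, ← intervalIntegral.integral_add (hc'.intervalIntegrable 0 1)
    (hc.intervalIntegrable 0 1), fejer, ← intervalIntegral.integral_ofReal]
  refine intervalIntegral.integral_congr fun v hv => ?_
  rw [Set.uIcc_of_le zero_le_one] at hv
  have e1 : Complex.I * u * v = (u * v : ℂ) * Complex.I := by ring
  have e2 : Complex.I * u * (-v : ℂ) = (-(u * v : ℂ)) * Complex.I := by ring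
  simp only [abs_neg, abs_of_nonneg hv.1, Complex.ofReal_neg, Complex.ofReal_mul,
    Complex.ofReal_cos, e1, e2]
  push_cast
  rw [← mul_add, Complex.cos]
  ring

lemma fejer_eq {u : ℝ} (hu : u ≠ 0) : fejer u = 2 * (1 - Real.cos u) / u ^ 2 := by
  have h : ∀ v ∈ Set.uIcc (0 : ℝ) 1, HasDerivAt
      (fun v => 2 * ((1 - v) * Real.sin (u * v) / u - Real.cos (u * v) / u ^ 2))
      (2 * (1 - v) * Real.cos (u * v)) v := by
    intro v _
    have hl : HasDerivAt (fun v : ℝ => u * v) u v := by simpa using (hasDerivAt_id v).const_mul u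
    have h1 : HasDerivAt (fun v : ℝ => 1 - v) (-1) v := by
      simpa using (hasDerivAt_id v).const_sub 1
    convert! (((h1.mul hl.sin).div_const u).sub (hl.cos.div_const (u ^ 2))).const_mul 2 using 1
    field_simp
    ring
  rw [fejer, intervalIntegral.integral_eq_sub_of_hasDerivAt h
    (by apply Continuous.intervalIntegrable; fun_prop)]
  simp
  field_simp
  ring

lemma integral_one_sub : ∫ v in (0 : ℝ)..1, (1 - v) = 1 / 2 := by
  rw [intervalIntegral.integral_sub (by simp) (by simp)]
  norm_num

lemma fejer_continuous : Continuous fejer := by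
  unfold fejer
  apply intervalIntegral.continuous_parametric_intervalIntegral_of_continuous'
  fun_prop

lemma fejer_zero : fejer 0 = 1 := by
  simp [fejer, integral_one_sub]

lemma fejer_nonneg (u : ℝ) : 0 ≤ fejer u := by
  rcases eq_or_ne u 0 with rfl | hu
  · simp [fejer_zero]
  · rw [fejer_eq hu]
    have := Real.cos_le_one u
    apply div_nonneg <;> nlinarith

lemma fejer_ge {u : ℝ} (hu : |u| ≤ 1) : 1 / 2 ≤ fejer u := by
  have h : ∫ v in (0 : ℝ)..1, (1 - v) ≤ fejer u := by
    apply intervalIntegral.integral_mono_on zero_le_one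
    · apply Continuous.intervalIntegrable; fun_prop
    · apply Continuous.intervalIntegrable; fun_prop
    · intro v hv
      have h1 : (u * v) ^ 2 ≤ 1 := by
        have : u ^ 2 ≤ 1 := by rwa [sq_le_one_iff_abs_le_one]
        have : v ^ 2 ≤ 1 := by nlinarith [hv.1, hv.2]
        rw [mul_pow]
        nlinarith [sq_nonneg u, sq_nonneg v]
      have h2 := Real.one_sub_sq_div_two_le_cos (x := u * v)
      nlinarith [hv.2]
  rwa [integral_one_sub] at h

lemma fejer_le (u : ℝ) : fejer u ≤ 5 * (1 + u ^ 2)⁻¹ := by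
  have h1 : fejer u ≤ 1 := by
    have : fejer u ≤ ∫ v in (0 : ℝ)..1, 2 * (1 - v) := by
      apply intervalIntegral.integral_mono_on zero_le_one
      · apply Continuous.intervalIntegrable; fun_prop
      · apply Continuous.intervalIntegrable; fun_prop
      · intro v hv
        have := Real.cos_le_one (u * v)
        nlinarith [hv.2]
    rw [intervalIntegral.integral_const_mul, integral_one_sub] at this
    linarith
  have h2 : u ^ 2 * fejer u ≤ 4 := by
    rcases eq_or_ne u 0 with rfl | hu
    · simp
    · rw [fejer_eq hu]
      have := Real.neg_one_le_cos u
      field_simp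
      linarith
  rw [← div_eq_mul_inv, le_div_iff₀ (by positivity)]
  nlinarith

lemma fejer_integrable : MeasureTheory.Integrable fejer := by
  refine (integrable_inv_one_add_sq.const_mul 5).mono' fejer_continuous.aestronglyMeasurable ?_
  refine Filter.Eventually.of_forall fun u => ?_
  rw [Real.norm_of_nonneg (fejer_nonneg u)]
  exact fejer_le u

lemma fejer_integral_le : ∫ u, fejer u ≤ 5 * Real.pi := by
  rw [← integral_univ_inv_one_add_sq, ← MeasureTheory.integral_const_mul]
  exact MeasureTheory.integral_mono fejer_integrable (integrable_inv_one_add_sq.const_mul 5)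
    fejer_le

/-- The contribution of a simple pole at `1` to the Fejér-smoothed integral along
`Re s = 1 + ε` is bounded independently of `ε` and `T`: writing `1 / (ε + i v)` as a Laplace
transform turns the integral into `∫ w > 0, exp (-ε w) * fejer (T - w)`. -/
lemma pole_bound {ε : ℝ} (hε : 0 < ε) (T : ℝ) :
    ‖∫ v in (-1 : ℝ)..1, ((1 - |v| : ℝ) : ℂ) * Complex.exp (Complex.I * T * v) *
      (1 / (ε + Complex.I * v))‖ ≤ 5 * Real.pi := by
  have hre (v : ℝ) : (-(ε + Complex.I * v : ℂ)).re < 0 := by simpa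
  have hne (v : ℝ) : (ε + Complex.I * v : ℂ) ≠ 0 := by
    intro h
    have := hre v
    rw [h] at this
    simp at this
  have hlap (v : ℝ) : (1 / (ε + Complex.I * v) : ℂ) =
      ∫ w in Set.Ioi (0 : ℝ), Complex.exp (-(ε + Complex.I * v) * w) := by
    rw [integral_exp_mul_complex_Ioi (hre v)]
    have := hne v
    rw [neg_div_neg_eq]
    simp
  simp_rw [hlap, ← MeasureTheory.integral_const_mul]
  rw [MeasureTheory.intervalIntegral_integral_swap]
  -- After the exchange the inner integral over `v` is the Fejér kernel at `T - w`.
  · have key : ∀ w : ℝ, ∫ v in (-1 : ℝ)..1, ((1 - |v| : ℝ) : ℂ) * Complex.exp (Complex.I * T * v) *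
        Complex.exp (-(ε + Complex.I * v) * w) = ((Real.exp (-ε * w) * fejer (T - w) : ℝ) : ℂ) := by
      intro w
      rw [Complex.ofReal_mul, ← fejer_eq_integral, ← intervalIntegral.integral_const_mul]
      refine intervalIntegral.integral_congr fun v _ => ?_
      simp only [Complex.ofReal_exp]
      rw [mul_assoc, ← Complex.exp_add, mul_left_comm, ← Complex.exp_add]
      congr 2
      push_cast
      ring
    simp_rw [key]
    rw [integral_complex_ofReal, Complex.norm_real, Real.norm_of_nonneg]
    · refine le_trans ?_ fejer_integral_le
      have e : ∫ u, fejer u = ∫ w, fejer (T - w) :=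
        (MeasureTheory.integral_sub_left_eq_self fejer MeasureTheory.volume T).symm
      rw [e]
      have hi : MeasureTheory.Integrable (fun w => fejer (T - w)) := fejer_integrable.comp_sub_left T
      refine le_trans ?_ (MeasureTheory.setIntegral_le_integral (s := Set.Ioi 0) hi
        (Filter.Eventually.of_forall fun w => fejer_nonneg _))
      refine MeasureTheory.integral_mono_of_nonneg (Filter.Eventually.of_forall fun w => ?_)
        hi.integrableOn ?_
      · exact mul_nonneg (Real.exp_pos _).le (fejer_nonneg _)
      · refine (MeasureTheory.ae_restrict_mem measurableSet_Ioi).mono fun w hw => ?_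
        have : Real.exp (-ε * w) ≤ 1 := by
          rw [Real.exp_le_one_iff]
          have : 0 < w := hw
          nlinarith
        exact mul_le_of_le_one_left (fejer_nonneg _) this
    · exact MeasureTheory.integral_nonneg fun w =>
        mul_nonneg (Real.exp_pos _).le (fejer_nonneg _)
  -- Integrability on the product, dominated by `exp (-ε w)`, justifies the exchange.
  · have hb : MeasureTheory.Integrable (fun p : ℝ × ℝ => (1 : ℝ) * Real.exp (-ε * p.2))
        ((MeasureTheory.volume.restrict (Set.uIoc (-1 : ℝ) 1)).prod
          (MeasureTheory.volume.restrict (Set.Ioi 0))) := by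
      apply MeasureTheory.Integrable.mul_prod (f := fun _ : ℝ => (1 : ℝ))
        (g := fun w : ℝ => Real.exp (-ε * w))
      · simp [Set.uIoc]
      · exact exp_neg_integrableOn_Ioi 0 hε
    refine hb.mono' ?_ ?_
    · apply Continuous.aestronglyMeasurable
      simp only [Function.uncurry_def]
      fun_prop
    · rw [MeasureTheory.Measure.prod_restrict]
      refine (MeasureTheory.ae_restrict_mem (measurableSet_uIoc.prod measurableSet_Ioi)).mono ?_
      rintro ⟨v, w⟩ ⟨hv, hw⟩
      simp only [Function.uncurry_def, norm_mul, Complex.norm_exp, Complex.norm_real]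
      have h1 : ‖(1 - |v| : ℝ)‖ ≤ 1 := by
        rw [Set.uIoc_of_le (by norm_num)] at hv
        have : |v| ≤ 1 := abs_le.2 ⟨hv.1.le, hv.2⟩
        rw [Real.norm_eq_abs, abs_le]; constructor <;> linarith [abs_nonneg v]
      simpa using mul_le_of_le_one_left (Real.exp_pos _).le h1

/-! ### A one-sided Wiener-Ikehara theorem -/

/-- Integrating a Dirichlet series against the Fejér kernel along `Re s = 1 + ε` yields the sum of
its coefficients weighted by `n ^ (-(1 + ε)) * fejer (T - log n)`. -/
lemma smoothed_hasSum {f : ℕ → ℝ} {ε : ℝ}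
    (hsum : ∀ s : ℂ, 1 < s.re → LSeriesSummable (fun n => (f n : ℂ)) s) (hε : 0 < ε) (T : ℝ) :
    HasSum (fun n : ℕ => ((f n * (n : ℝ) ^ (-(1 + ε)) * fejer (T - Real.log n) : ℝ) : ℂ))
      (∫ v in (-1 : ℝ)..1, ((1 - |v| : ℝ) : ℂ) * Complex.exp (Complex.I * T * v) *
        LSeries (fun n => (f n : ℂ)) (1 + ε + Complex.I * v)) := by
  have hs1 : LSeriesSummable (fun n => (f n : ℂ)) (1 + ε : ℂ) := hsum _ (by simpa)
  have key : ∀ n : ℕ, ∫ v in (-1 : ℝ)..1, ((1 - |v| : ℝ) : ℂ) * Complex.exp (Complex.I * T * v) *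
      LSeries.term (fun n => (f n : ℂ)) (1 + ε + Complex.I * v) n =
      ((f n * (n : ℝ) ^ (-(1 + ε)) * fejer (T - Real.log n) : ℝ) : ℂ) := by
    intro n
    rcases eq_or_ne n 0 with rfl | hn
    · have : (0 : ℝ) ^ (-(1 + ε)) = 0 := Real.zero_rpow (by linarith)
      simp only [LSeries.term_zero, mul_zero, Nat.cast_zero, this, zero_mul,
        intervalIntegral.integral_zero, Complex.ofReal_zero]
    · rw [Complex.ofReal_mul, ← fejer_eq_integral, ← intervalIntegral.integral_const_mul]
      refine intervalIntegral.integral_congr fun v _ => ?_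
      have hn' : (0 : ℝ) < n := by positivity
      simp only [LSeries.term_of_ne_zero hn]
      rw [Complex.cpow_def_of_ne_zero (by exact_mod_cast hn), Real.rpow_def_of_pos hn',
        ← Complex.natCast_log, div_eq_mul_inv, ← Complex.exp_neg]
      push_cast
      have : ∀ a b c x y z : ℂ, Complex.exp x * Complex.exp y = Complex.exp z * Complex.exp c →
        a * Complex.exp x * (b * Complex.exp y) = b * Complex.exp z * (a * Complex.exp c) := by
        intro a b c x y z h
        linear_combination (a * b) * h
      apply this
      rw [← Complex.exp_add, ← Complex.exp_add]
      congr 1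
      ring
  simp_rw [← key]
  refine intervalIntegral.hasSum_integral_of_dominated_convergence
    (fun n _ => ‖LSeries.term (fun n => (f n : ℂ)) (1 + ε : ℂ) n‖) (fun n => ?_) (fun n => ?_) ?_ ?_ ?_
  · apply Continuous.aestronglyMeasurable
    rcases eq_or_ne n 0 with rfl | hn
    · simp only [LSeries.term_zero, mul_zero]
      fun_prop
    · simp only [LSeries.term_of_ne_zero hn]
      have : ∀ s : ℂ, (n : ℂ) ^ s ≠ 0 := fun s => by
        rw [Ne, Complex.cpow_eq_zero_iff]
        simp [hn]
      have hc : Continuous fun v : ℝ => (n : ℂ) ^ (1 + ε + Complex.I * v : ℂ) :=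
        (Continuous.const_cpow (by fun_prop) (Or.inl (by exact_mod_cast hn)))
      exact (by fun_prop : Continuous fun v : ℝ =>
        ((1 - |v| : ℝ) : ℂ) * Complex.exp (Complex.I * T * v)).mul
        (continuous_const.div hc fun v => this _)
  · refine Filter.Eventually.of_forall fun v hv => ?_
    have h1 : ‖(1 - |v| : ℝ)‖ ≤ 1 := by
      rw [Set.uIoc_of_le (by norm_num)] at hv
      have : |v| ≤ 1 := abs_le.2 ⟨hv.1.le, hv.2⟩
      rw [Real.norm_eq_abs, abs_le]; constructor <;> linarith [abs_nonneg v]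
    have h2 : ‖Complex.exp (Complex.I * T * v)‖ = 1 := by
      simp [Complex.norm_exp]
    rw [norm_mul, norm_mul, h2, Complex.norm_real, mul_one]
    refine (mul_le_of_le_one_left (norm_nonneg _) h1).trans ?_
    exact LSeries.norm_term_le_of_re_le_re _ (by simp) n
  · exact Filter.Eventually.of_forall fun v hv => hs1.norm
  · exact intervalIntegrable_const
  · refine Filter.Eventually.of_forall fun v hv => ?_
    exact (hsum (1 + ε + Complex.I * v) (by simpa)).hasSum.mul_left _

/-- Upper-bound half of the Wiener-Ikehara theorem, on dyadic blocks. Only continuity of `G` up to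
the line `Re s = 1` is used; the constant is not sharp, but it is linear in the residue `c`. -/
lemma tauberian {f : ℕ → ℝ} (hf0 : ∀ n, 0 ≤ f n) {G : ℂ → ℂ} {c : ℝ} (hc : 0 ≤ c)
    (hG : ContinuousOn G {s | 1 ≤ s.re})
    (hsum : ∀ s : ℂ, 1 < s.re → LSeriesSummable (fun n => (f n : ℂ)) s)
    (hFG : ∀ s : ℂ, 1 < s.re → LSeries (fun n => (f n : ℂ)) s = G s + c / (s - 1))
    {δ : ℝ} (hδ : 0 < δ) :
    ∃ N : ℕ, ∀ x : ℕ, N ≤ x →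
      ∑ n ∈ Finset.Ioc (x / 2) x, f n ≤ 2 * (5 * Real.pi * c + δ) * x := by
  -- `G` along vertical lines, frozen to the left of the line `Re s = 1`
  set H : ℝ → ℝ → ℂ := fun ε v => G (1 + (max ε 0 : ℝ) + Complex.I * v) with hH
  have hHc : Continuous (Function.uncurry H) := by
    refine hG.comp_continuous (f := fun p : ℝ × ℝ => (1 + (max p.1 0 : ℝ) + Complex.I * p.2 : ℂ))
      (by fun_prop) fun p => ?_
    simp
  set J : ℝ → ℝ → ℂ := fun T ε => ∫ v in (-1 : ℝ)..1,
    ((1 - |v| : ℝ) : ℂ) * Complex.exp (Complex.I * T * v) * H ε v with hJ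
  have hJc : ∀ T, Continuous (J T) := by
    intro T
    apply intervalIntegral.continuous_parametric_intervalIntegral_of_continuous'
    have : Continuous fun p : ℝ × ℝ =>
      ((1 - |p.2| : ℝ) : ℂ) * Complex.exp (Complex.I * T * p.2) := by fun_prop
    exact this.mul hHc
  -- For `ε > 0` the smoothed sum is the polar part, at most `5 π c`, plus `J T ε`.
  have hS : ∀ T ε : ℝ, 0 < ε → ∀ s : Finset ℕ,
      ∑ n ∈ s, f n * (n : ℝ) ^ (-(1 + ε)) * fejer (T - Real.log n) ≤
        5 * Real.pi * c + ‖J T ε‖ := by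
    intro T ε hε s
    have h1 := smoothed_hasSum hsum hε T
    set P : ℂ := ∫ v in (-1 : ℝ)..1, ((1 - |v| : ℝ) : ℂ) * Complex.exp (Complex.I * T * v) *
      (1 / (ε + Complex.I * v)) with hP
    have h2 : (∫ v in (-1 : ℝ)..1, ((1 - |v| : ℝ) : ℂ) * Complex.exp (Complex.I * T * v) *
        LSeries (fun n => (f n : ℂ)) (1 + ε + Complex.I * v)) = c * P + J T ε := by
      rw [hP, hJ, ← intervalIntegral.integral_const_mul, ← intervalIntegral.integral_add]
      · refine intervalIntegral.integral_congr fun v _ => ?_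
        simp only [hH, max_eq_left hε.le]
        rw [hFG _ (by simpa)]
        rw [show (1 + ε + Complex.I * v - 1 : ℂ) = ε + Complex.I * v by ring]
        ring
      · apply Continuous.intervalIntegrable
        refine continuous_const.mul ((by fun_prop : Continuous fun v : ℝ =>
          ((1 - |v| : ℝ) : ℂ) * Complex.exp (Complex.I * T * v)).mul
          (continuous_const.div (by fun_prop) fun v h => ?_))
        have := congrArg Complex.re h
        simp at this
        exact hε.ne' this
      · apply Continuous.intervalIntegrable
        exact (by fun_prop : Continuous fun v : ℝ =>
          ((1 - |v| : ℝ) : ℂ) * Complex.exp (Complex.I * T * v)).mul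
          (hHc.comp (by fun_prop : Continuous fun v : ℝ => (ε, v)))
    rw [h2] at h1
    have h3 := Complex.hasSum_re h1
    simp only [Complex.ofReal_re] at h3
    have hnn : ∀ n : ℕ, 0 ≤ f n * (n : ℝ) ^ (-(1 + ε)) * fejer (T - Real.log n) := fun n =>
      mul_nonneg (mul_nonneg (hf0 n) (by positivity)) (fejer_nonneg _)
    refine (sum_le_hasSum s (fun n _ => hnn n) h3).trans ((Complex.re_le_norm _).trans ?_)
    refine (norm_add_le _ _).trans ?_
    gcongr
    rw [norm_mul, Complex.norm_real, Real.norm_of_nonneg hc, mul_comm]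
    gcongr
    exact pole_bound hε T
  -- Finite partial sums allow `ε → 0` term by term, by continuity of `J T`.
  have hS0 : ∀ T : ℝ, ∀ s : Finset ℕ, (∀ n ∈ s, n ≠ 0) →
      ∑ n ∈ s, f n * (n : ℝ)⁻¹ * fejer (T - Real.log n) ≤ 5 * Real.pi * c + ‖J T 0‖ := by
    intro T s hs
    have hl : Filter.Tendsto (fun ε : ℝ =>
        ∑ n ∈ s, f n * (n : ℝ) ^ (-(1 + ε)) * fejer (T - Real.log n)) (nhdsWithin 0 (Set.Ioi 0))
        (nhds (∑ n ∈ s, f n * (n : ℝ)⁻¹ * fejer (T - Real.log n))) := by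
      refine tendsto_finsetSum _ fun n hn => ?_
      refine Filter.Tendsto.mono_left ?_ nhdsWithin_le_nhds
      have hn0 : (n : ℝ) ≠ 0 := by exact_mod_cast hs n hn
      have : Continuous fun ε : ℝ => f n * (n : ℝ) ^ (-(1 + ε)) * fejer (T - Real.log n) :=
        (continuous_const.mul (Continuous.rpow continuous_const (by fun_prop)
          fun _ => Or.inl hn0)).mul continuous_const
      have h := this.tendsto 0
      simpa [Real.rpow_neg_one] using h
    have hr : Filter.Tendsto (fun ε : ℝ => 5 * Real.pi * c + ‖J T ε‖) (nhdsWithin 0 (Set.Ioi 0))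
        (nhds (5 * Real.pi * c + ‖J T 0‖)) :=
      ((continuous_const.add (hJc T).norm).tendsto 0).mono_left nhdsWithin_le_nhds
    exact le_of_tendsto_of_tendsto hl hr
      (Filter.eventually_of_mem self_mem_nhdsWithin fun ε hε => hS T ε hε s)
  -- Riemann-Lebesgue lemma for the bounded function `v ↦ (1 - |v|) * H 0 v` on `(-1, 1]`
  have hRL : Filter.Tendsto (fun T : ℝ => J T 0) Filter.atTop (nhds 0) := by
    have h := Real.tendsto_integral_exp_smul_cocompact
      ((Set.Ioc (-1 : ℝ) 1).indicator fun v : ℝ => ((1 - |v| : ℝ) : ℂ) * H 0 v)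
    have hT : Filter.Tendsto (fun T : ℝ => -(T / (2 * Real.pi))) Filter.atTop
        (Filter.cocompact ℝ) := by
      refine Filter.Tendsto.mono_right ?_ atBot_le_cocompact
      exact Filter.tendsto_neg_atTop_atBot.comp
        (Filter.tendsto_id.atTop_div_const (by positivity))
    refine (h.comp hT).congr fun T => ?_
    simp only [Function.comp, hJ]
    rw [intervalIntegral.integral_of_le (by norm_num),
      ← MeasureTheory.integral_indicator measurableSet_Ioc]
    congr 1
    ext v
    simp only [Set.indicator_apply]
    split_ifs
    · rw [Circle.smul_def, Real.fourierChar_apply, smul_eq_mul]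
      have : ((2 * Real.pi * -(v * -(T / (2 * Real.pi))) : ℝ) : ℂ) * Complex.I =
          Complex.I * T * v := by
        rw [show 2 * Real.pi * -(v * -(T / (2 * Real.pi))) = T * v by field_simp]
        push_cast
        ring
      rw [this]
      ring
    · simp
  have hev := (hRL.comp (Real.tendsto_log_atTop.comp
    tendsto_natCast_atTop_atTop)).norm.eventually_lt_const (u := δ) (by simpa using hδ)
  obtain ⟨N, hN⟩ := Filter.eventually_atTop.1 hev
  refine ⟨max N 1, fun x hx => ?_⟩
  have hx1 : 1 ≤ x := le_trans (le_max_right _ _) hx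
  have hx0 : (0 : ℝ) < x := by exact_mod_cast hx1
  have h1 := hS0 (Real.log x) (Finset.Ioc (x / 2) x) (fun n hn => by
    have := (Finset.mem_Ioc.1 hn).1; omega)
  have h2 : ‖J (Real.log x) 0‖ < δ := hN x (le_trans (le_max_left _ _) hx)
  -- For `x / 2 < n ≤ x` one has `0 ≤ log x - log n ≤ log 2 < 1`, where the kernel is at least `1/2`.
  have h3 : ∑ n ∈ Finset.Ioc (x / 2) x, f n * ((x : ℝ)⁻¹ * (1 / 2)) ≤
      ∑ n ∈ Finset.Ioc (x / 2) x, f n * (n : ℝ)⁻¹ * fejer (Real.log x - Real.log n) := by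
    refine Finset.sum_le_sum fun n hn => ?_
    rw [Finset.mem_Ioc] at hn
    have hn0 : (0 : ℝ) < n := by
      have : 0 < n := by omega
      exact_mod_cast this
    have hnx : (n : ℝ) ≤ x := by exact_mod_cast hn.2
    have hxn : (x : ℝ) ≤ 2 * n := by
      have : x ≤ 2 * n := by omega
      exact_mod_cast this
    rw [mul_assoc]
    refine mul_le_mul_of_nonneg_left ?_ (hf0 n)
    refine mul_le_mul (by gcongr) (fejer_ge ?_) (by norm_num) (by positivity)
    rw [abs_of_nonneg (sub_nonneg.2 (Real.log_le_log hn0 hnx))]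
    have : Real.log x ≤ Real.log 2 + Real.log n := by
      rw [← Real.log_mul (by norm_num) hn0.ne']
      exact Real.log_le_log hx0 hxn
    linarith [Real.log_two_lt_d9]
  rw [← Finset.sum_mul] at h3
  have h4 : (∑ n ∈ Finset.Ioc (x / 2) x, f n) * ((x : ℝ)⁻¹ * (1 / 2)) ≤ 5 * Real.pi * c + δ := by
    linarith
  calc _ = (∑ n ∈ Finset.Ioc (x / 2) x, f n) * ((x : ℝ)⁻¹ * (1 / 2)) * (2 * x) := by field_simp
    _ ≤ (5 * Real.pi * c + δ) * (2 * x) := by gcongr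
    _ = _ := by ring

/-! ### Primes in residue classes -/

open ArithmeticFunction.vonMangoldt in
/-- `ψ(x; M, a) ≤ C x / φ(M)` with `C` absolute, for `x` large in terms of `M`. The residue at
`s = 1` of the Dirichlet series of `residueClass a` is `1 / φ(M)`. -/
lemma psi_residue_le (M : ℕ) [NeZero M] {a : ZMod M} (ha : IsUnit a) :
    ∃ N : ℕ, ∀ x : ℕ, N ≤ x →
      ∑ n ∈ Finset.Ioc 0 x, residueClass a n ≤ (20 * Real.pi + 5) * (x / M.totient) := by
  have hφ : (0 : ℝ) < M.totient := by exact_mod_cast Nat.totient_pos.2 (NeZero.pos M)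
  obtain ⟨N, hN⟩ := tauberian (f := fun n => residueClass a n) (residueClass_nonneg a)
    (G := LFunctionResidueClassAux a) (c := (M.totient : ℝ)⁻¹) (by positivity)
    (continuousOn_LFunctionResidueClassAux a)
    (fun s hs => LSeriesSummable_of_abscissaOfAbsConv_lt_re
      ((abscissaOfAbsConv_residueClass_le_one a).trans_lt (by exact_mod_cast hs)))
    (fun s hs => by
      rw [eqOn_LFunctionResidueClassAux ha hs]
      push_cast
      ring) (δ := (M.totient : ℝ)⁻¹) (by positivity)
  set B : ℝ := 2 * (5 * Real.pi * (M.totient : ℝ)⁻¹ + (M.totient : ℝ)⁻¹) with hB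
  have hB0 : 0 ≤ B := by have := Real.pi_pos; positivity
  set ψ : ℕ → ℝ := fun x => ∑ n ∈ Finset.Ioc 0 x, residueClass a n with hψ
  have hψ0 : ∀ x, 0 ≤ ψ x := fun x => Finset.sum_nonneg fun n _ => residueClass_nonneg a n
  -- Summing the dyadic blocks `(x / 2, x]` down to the threshold `N`.
  have hrec : ∀ x : ℕ, ψ x ≤ ψ N + 2 * B * x := by
    intro x
    induction x using Nat.strong_induction_on with
    | _ x ih =>
      rcases le_or_gt x N with h | h
      · have : ψ x ≤ ψ N := Finset.sum_le_sum_of_subset_of_nonneg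
          (Finset.Ioc_subset_Ioc_right h) fun n _ _ => residueClass_nonneg a n
        have : 0 ≤ 2 * B * x := by positivity
        linarith
      · have h1 := ih (x / 2) (by omega)
        have h2 := hN x h.le
        have h3 : ψ x = ψ (x / 2) + ∑ n ∈ Finset.Ioc (x / 2) x, residueClass a n :=
          (Finset.sum_Ioc_consecutive _ (Nat.zero_le _) (Nat.div_le_self x 2)).symm
        have h4 : ((x / 2 : ℕ) : ℝ) ≤ x / 2 := Nat.cast_div_le
        have h5 : 2 * B * ((x / 2 : ℕ) : ℝ) ≤ 2 * B * (x / 2) := by gcongr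
        linarith
  -- For `x ≥ ψ N * φ(M)` the bounded remainder `ψ N` is absorbed into the main term.
  refine ⟨⌈ψ N * M.totient⌉₊, fun x hx => ?_⟩
  have h1 : ψ N * M.totient ≤ x := Nat.ceil_le.1 hx
  have h2 : ψ N ≤ x / M.totient := by rwa [le_div_iff₀ hφ]
  refine (hrec x).trans ?_
  have h3 : 2 * B * x = (20 * Real.pi + 4) * (x / M.totient) := by
    rw [hB]; field_simp; ring
  rw [h3]
  linarith

open Filter in
/-- A lower bound of Chebyshev type. -/
lemma primeCounting_lower : ∀ᶠ x : ℕ in atTop,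
    (x : ℝ) / (2 * Real.log x) ≤ (Nat.primeCounting x : ℝ) := by
  have h1 : Tendsto (fun x : ℕ => Real.log ((x + 1 : ℕ) : ℝ) / ((x + 1 : ℕ) : ℝ)) atTop (nhds 0) := by
    have := (Real.isLittleO_log_id_atTop.tendsto_div_nhds_zero).comp
      (tendsto_natCast_atTop_atTop (R := ℝ))
    exact (tendsto_add_atTop_iff_nat (f := fun x : ℕ => Real.log (x : ℝ) / (x : ℝ)) 1).2 this
  filter_upwards [h1.eventually_lt_const (show (0 : ℝ) < 1 / 20 by norm_num),
    eventually_ge_atTop 2] with x hx hx2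
  have hx2' : (2 : ℝ) ≤ x := by exact_mod_cast hx2
  have hl : 0 < Real.log x := Real.log_pos (by linarith)
  have h2 := (Chebyshev.psi_ge x).trans (Chebyshev.psi_le_primeCounting_mul_log x)
  rw [div_lt_iff₀ (by positivity)] at hx
  push_cast at hx
  rw [div_le_iff₀ (by positivity)]
  have := Real.log_two_gt_d9
  nlinarith

open Filter in
lemma sqrt_small {c : ℝ} (hc : 0 < c) : ∀ᶠ x : ℕ in atTop,
    Real.sqrt x ≤ c * (x / Real.log x) := by
  have h1 : Tendsto (fun x : ℕ => Real.log (x : ℝ) / (x : ℝ) ^ (1 / 2 : ℝ)) atTop (nhds 0) :=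
    ((isLittleO_log_rpow_atTop (by norm_num)).tendsto_div_nhds_zero).comp
      (tendsto_natCast_atTop_atTop (R := ℝ))
  filter_upwards [h1.eventually_lt_const hc, eventually_ge_atTop 2] with x hx hx2
  have hx2' : (2 : ℝ) ≤ x := by exact_mod_cast hx2
  have hl : 0 < Real.log x := Real.log_pos (by linarith)
  rw [← Real.sqrt_eq_rpow] at hx
  have hs : 0 < Real.sqrt x := Real.sqrt_pos.2 (by linarith)
  rw [div_lt_iff₀ hs] at hx
  rw [← mul_div_assoc, le_div_iff₀ hl]
  nlinarith [Real.mul_self_sqrt (show (0 : ℝ) ≤ x by linarith)]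

open ArithmeticFunction.vonMangoldt Filter in
/-- `π(x; M, a) ≤ C π(x) / φ(M)` with `C` absolute, for `x` large in terms of `M`: primes up to
`√x` are negligible, and each larger one contributes at least `log x / 2` to `ψ(x; M, a)`. -/
lemma prime_residue_le (M : ℕ) [NeZero M] {a : ZMod M} (ha : IsUnit a) :
    ∀ᶠ x : ℕ in atTop,
      (((Finset.Icc 0 x).filter fun p : ℕ => p.Prime ∧ (p : ZMod M) = a).card : ℝ) ≤
        (80 * Real.pi + 22) / M.totient * (Nat.primeCounting x : ℝ) := by
  have hφ : (0 : ℝ) < M.totient := by exact_mod_cast Nat.totient_pos.2 (NeZero.pos M)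
  obtain ⟨N, hN⟩ := psi_residue_le M ha
  filter_upwards [primeCounting_lower, sqrt_small (c := (M.totient : ℝ)⁻¹) (by positivity),
    eventually_ge_atTop N, eventually_ge_atTop 2] with x h1 h2 h3 hx2
  have hx2' : (2 : ℝ) ≤ x := by exact_mod_cast hx2
  have hl : 0 < Real.log x := Real.log_pos (by linarith)
  have h4 := hN x h3
  set A := (Finset.Icc 0 x).filter fun p : ℕ => p.Prime ∧ (p : ZMod M) = a with hA
  have hsplit : A.card ≤ (Finset.Icc 1 (Nat.sqrt x)).card +
      (A.filter fun p => Nat.sqrt x < p).card := by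
    rw [← Finset.card_filter_add_card_filter_not (s := A) (fun p => p ≤ Nat.sqrt x)]
    simp only [not_le]
    gcongr
    intro p hp
    simp only [hA, Finset.mem_filter, Finset.mem_Icc] at hp ⊢
    exact ⟨hp.1.2.1.one_lt.le, hp.2⟩
  have hs1 : ((Finset.Icc 1 (Nat.sqrt x)).card : ℝ) ≤ Real.sqrt x := by
    simpa using Real.nat_sqrt_le_real_sqrt
  have hs2 : ((A.filter fun p => Nat.sqrt x < p).card : ℝ) * (Real.log x / 2) ≤
      ∑ n ∈ Finset.Ioc 0 x, residueClass a n := by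
    rw [← nsmul_eq_mul]
    refine le_trans (Finset.card_nsmul_le_sum _ (fun n => residueClass a n) _ ?_)
      (Finset.sum_le_sum_of_subset_of_nonneg ?_ fun n _ _ => residueClass_nonneg a n)
    · intro p hp
      simp only [hA, Finset.mem_filter, Finset.mem_Icc] at hp
      have hpa : residueClass a p = Real.log p := by
        rw [residueClass, Set.indicator_of_mem (by exact hp.1.2.2),
          ArithmeticFunction.vonMangoldt_apply_prime hp.1.2.1]
      rw [hpa]
      have : x < p * p := Nat.sqrt_lt.1 hp.2
      have h5 : (x : ℝ) ≤ p * p := by exact_mod_cast this.le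
      have hp0 : (p : ℝ) ≠ 0 := by exact_mod_cast hp.1.2.1.ne_zero
      have := Real.log_le_log (by linarith) h5
      rw [Real.log_mul hp0 hp0] at this
      linarith
    · intro p hp
      simp only [hA, Finset.mem_filter, Finset.mem_Icc] at hp
      exact Finset.mem_Ioc.2 ⟨hp.1.2.1.pos, hp.1.1.2⟩
  have hs3 : ((A.filter fun p => Nat.sqrt x < p).card : ℝ) ≤
      (40 * Real.pi + 10) * (M.totient : ℝ)⁻¹ * (x / Real.log x) := by
    have := hs2.trans h4
    rw [← le_div_iff₀ (by positivity)] at this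
    refine this.trans (le_of_eq ?_)
    field_simp
    ring
  have hc : (A.card : ℝ) ≤ Real.sqrt x + (A.filter fun p => Nat.sqrt x < p).card := by
    refine le_trans ?_ (add_le_add_left hs1 _)
    exact_mod_cast hsplit
  have h6 : (x : ℝ) / Real.log x ≤ 2 * Nat.primeCounting x := by
    have : (x : ℝ) / Real.log x = 2 * (x / (2 * Real.log x)) := by field_simp
    linarith
  calc (A.card : ℝ) ≤ (40 * Real.pi + 11) * (M.totient : ℝ)⁻¹ * (x / Real.log x) := by
        have : 0 ≤ (M.totient : ℝ)⁻¹ * (x / Real.log x) := by positivity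
        linarith
    _ ≤ (40 * Real.pi + 11) * (M.totient : ℝ)⁻¹ * (2 * Nat.primeCounting x) := by
        gcongr
    _ = _ := by field_simp; ring

/-! ### Mertens' theorem -/

lemma pow_dvd_factorial_mul {p : ℕ} (hp : 0 < p) (k : ℕ) : p ^ k ∣ (p * k).factorial := by
  induction k with
  | zero => simp
  | succ k ih =>
    have h : p * (k + 1) = (p * k + (p - 1)) + 1 := by rw [Nat.mul_succ]; omega
    rw [h, Nat.factorial_succ, pow_succ, mul_comm, ← h]
    exact mul_dvd_mul (Dvd.intro _ rfl)
      (ih.trans (Nat.factorial_dvd_factorial (Nat.le_add_right _ _)))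

open Finset in
/-- Upper half of Mertens' first theorem: the product of the `p ^ ⌊N / p⌋` divides `N !`, and
replacing `⌊N / p⌋` by `N / p` costs `θ(N) = O(N)`. -/
lemma sum_log_div_le {N : ℕ} (hN : 1 ≤ N) :
    ∑ p ∈ N.primesBelow, Real.log p / p ≤ Real.log N + Real.log 4 := by
  have hN0 : (0 : ℝ) < N := by exact_mod_cast hN
  have hpr : ∀ p ∈ N.primesBelow, p.Prime := fun p hp => Nat.prime_of_mem_primesBelow hp
  have hdvd : ∏ p ∈ N.primesBelow, p ^ (N / p) ∣ N.factorial := by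
    refine Finset.prod_dvd_of_isRelPrime (fun p hp q hq hpq => ?_) fun p hp => ?_
    · rw [Function.onFun, ← Nat.coprime_iff_isRelPrime]
      exact Nat.Coprime.pow _ _ ((Nat.coprime_primes (hpr p hp) (hpr q hq)).2 hpq)
    · exact (pow_dvd_factorial_mul (hpr p hp).pos _).trans
        (Nat.factorial_dvd_factorial (Nat.mul_div_le N p))
  have h1 : ∑ p ∈ N.primesBelow, ((N / p : ℕ) : ℝ) * Real.log p ≤ N * Real.log N := by
    have hle : (∏ p ∈ N.primesBelow, p ^ (N / p)) ≤ N ^ N :=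
      (Nat.le_of_dvd (Nat.factorial_pos _) hdvd).trans (Nat.factorial_le_pow N)
    have h2 : Real.log ((∏ p ∈ N.primesBelow, p ^ (N / p) : ℕ) : ℝ) ≤ Real.log ((N ^ N : ℕ) : ℝ) := by
      apply Real.log_le_log
      · exact_mod_cast Finset.prod_pos fun p hp => pow_pos (hpr p hp).pos _
      · exact_mod_cast hle
    push_cast at h2
    rw [Real.log_prod (fun p hp => by have := (hpr p hp).pos; positivity)] at h2
    simpa [Real.log_pow] using h2
  have h2 : ∑ p ∈ N.primesBelow, Real.log p ≤ Real.log 4 * N := by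
    refine le_trans ?_ (Chebyshev.theta_le_log4_mul_x hN0.le)
    rw [Chebyshev.theta_eq_sum_primesLE_log]
    refine Finset.sum_le_sum_of_subset_of_nonneg (fun p hp => ?_) fun p _ _ => Real.log_natCast_nonneg p
    have := Nat.lt_of_mem_primesBelow hp
    simp [Nat.mem_primesLE, hpr p hp, this.le]
  have h3 : ∑ p ∈ N.primesBelow, (N : ℝ) * (Real.log p / p) ≤
      ∑ p ∈ N.primesBelow, (((N / p : ℕ) : ℝ) * Real.log p + Real.log p) := by
    refine Finset.sum_le_sum fun p hp => ?_
    have hp0 : (0 : ℝ) < p := by exact_mod_cast (hpr p hp).pos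
    have h4 : (N : ℝ) / p ≤ ((N / p : ℕ) : ℝ) + 1 := by
      rw [div_le_iff₀ hp0]
      have : N ≤ (N / p + 1) * p := by
        have := Nat.lt_div_mul_add (a := N) (hpr p hp).pos
        rw [add_mul]; omega
      exact_mod_cast this
    have h5 := mul_le_mul_of_nonneg_right h4 (Real.log_natCast_nonneg p)
    calc (N : ℝ) * (Real.log p / p) = N / p * Real.log p := by ring
      _ ≤ _ := by linarith
  rw [← Finset.mul_sum, Finset.sum_add_distrib] at h3
  have h6 : (N : ℝ) * ∑ p ∈ N.primesBelow, Real.log p / p ≤ N * (Real.log N + Real.log 4) := by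
    linarith
  exact le_of_mul_le_mul_left h6 hN0

/-- The completely multiplicative function `n ↦ n ^ (-s)` on `ℕ`. -/
noncomputable def rpowHom (s : ℝ) : ℕ →* ℝ where
  toFun n := (n : ℝ) ^ (-s)
  map_one' := by simp
  map_mul' m n := by rw [Nat.cast_mul, Real.mul_rpow (Nat.cast_nonneg m) (Nat.cast_nonneg n)]

/-- The finite Euler product over `p < N`, as a sum over `N`-smooth numbers. -/
lemma smooth_hasSum {s : ℝ} (hs : 0 < s) (N : ℕ) :
    HasSum (Set.indicator (Nat.smoothNumbers N) fun n : ℕ => (n : ℝ) ^ (-s))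
      (∏ p ∈ N.primesBelow, (1 - (p : ℝ) ^ (-s))⁻¹) := by
  rw [← hasSum_subtype_iff_indicator]
  refine (EulerProduct.summable_and_hasSum_smoothNumbers_prod_primesBelow_geometric
    (f := rpowHom s) (fun {p} hp => ?_) N).2
  change ‖(p : ℝ) ^ (-s)‖ < 1
  rw [Real.norm_of_nonneg (by positivity)]
  exact Real.rpow_lt_one_of_one_lt_of_neg (by exact_mod_cast hp.one_lt) (by linarith)

/-- The integers below `N` are `N`-smooth, so
`log N ≤ ∑ n < N, 1 / n ≤ ∏ p < N, (1 + 1 / (p - 1))`. -/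
lemma mertens_lower {N : ℕ} (hN : 2 ≤ N) :
    Real.log (Real.log N) ≤ ∑ p ∈ N.primesBelow, 1 / ((p : ℝ) - 1) := by
  have h1 : Real.log N ≤ ∑ n ∈ Finset.Icc 1 (N - 1), (n : ℝ)⁻¹ := by
    have := log_add_one_le_harmonic (N - 1)
    rw [Nat.sub_add_cancel (by omega), harmonic_eq_sum_Icc] at this
    push_cast at this
    exact this
  have h2 : ∑ n ∈ Finset.Icc 1 (N - 1), (n : ℝ)⁻¹ ≤
      ∏ p ∈ N.primesBelow, (1 - (p : ℝ) ^ (-(1 : ℝ)))⁻¹ := by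
    refine le_trans (le_of_eq ?_) (sum_le_hasSum (Finset.Icc 1 (N - 1))
      (fun n _ => Set.indicator_nonneg (fun n _ => by positivity) n) (smooth_hasSum one_pos N))
    refine Finset.sum_congr rfl fun n hn => ?_
    rw [Finset.mem_Icc] at hn
    rw [Set.indicator_of_mem (Nat.mem_smoothNumbers_of_lt (by omega) (by omega)),
      Real.rpow_neg_one]
  have h3 : ∏ p ∈ N.primesBelow, (1 - (p : ℝ) ^ (-(1 : ℝ)))⁻¹ ≤
      Real.exp (∑ p ∈ N.primesBelow, 1 / ((p : ℝ) - 1)) := by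
    rw [Real.exp_sum]
    have hp2 : ∀ p ∈ N.primesBelow, (2 : ℝ) ≤ p := fun p hp => by
      exact_mod_cast (Nat.prime_of_mem_primesBelow hp).two_le
    refine Finset.prod_le_prod (fun p hp => ?_) fun p hp => ?_
    · rw [Real.rpow_neg_one, inv_nonneg, sub_nonneg]
      exact inv_le_one_of_one_le₀ (by linarith [hp2 p hp])
    · have := hp2 p hp
      have h4 : (1 - (p : ℝ) ^ (-(1 : ℝ)))⁻¹ = 1 / ((p : ℝ) - 1) + 1 := by
        rw [Real.rpow_neg_one]
        have : (p : ℝ) - 1 ≠ 0 := by linarith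
        field_simp
        ring
      rw [h4]
      exact Real.add_one_le_exp _
  have hl : 0 < Real.log N := Real.log_pos (by exact_mod_cast hN)
  rw [Real.log_le_iff_le_exp hl]
  linarith

/-- Replacing `1 / p` by `1 / (p - 1)` costs at most the telescoping sum `∑ 1 / (n (n - 1)) ≤ 1`. -/
lemma sum_inv_pred_sub_le (N : ℕ) :
    ∑ p ∈ N.primesBelow, 1 / ((p : ℝ) - 1) ≤ ∑ p ∈ N.primesBelow, 1 / (p : ℝ) + 1 := by
  have h1 : ∀ N : ℕ, 2 ≤ N → ∑ n ∈ Finset.Ico 2 N, (1 / ((n : ℝ) - 1) - 1 / n) =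
      1 - 1 / ((N : ℝ) - 1) := by
    intro N hN
    induction N, hN using Nat.le_induction with
    | base => norm_num
    | succ n hn ih =>
      rw [Finset.sum_Ico_succ_top (by omega), ih]
      push_cast
      ring
  rcases lt_or_ge N 2 with h | h
  · have : N.primesBelow = ∅ := by
      ext p
      simp only [Nat.mem_primesBelow, Finset.notMem_empty, iff_false, not_and]
      intro hp hpp
      have := hpp.two_le
      omega
    simp [this]
  · have h2 : ∑ p ∈ N.primesBelow, (1 / ((p : ℝ) - 1) - 1 / p) ≤
        ∑ n ∈ Finset.Ico 2 N, (1 / ((n : ℝ) - 1) - 1 / n) := by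
      refine Finset.sum_le_sum_of_subset_of_nonneg (fun p hp => ?_) fun n hn _ => ?_
      · rw [Nat.mem_primesBelow] at hp
        exact Finset.mem_Ico.2 ⟨hp.2.two_le, hp.1⟩
      · have : (2 : ℝ) ≤ n := by exact_mod_cast (Finset.mem_Ico.1 hn).1
        rw [sub_nonneg]
        apply one_div_le_one_div_of_le <;> linarith
    rw [h1 N h, Finset.sum_sub_distrib] at h2
    have : (2 : ℝ) ≤ N := by exact_mod_cast h
    have : 0 ≤ 1 / ((N : ℝ) - 1) := one_div_nonneg.2 (by linarith)
    linarith

open Filter in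
/-- With `s = 1 + 1 / log N`, the Euler product and `ζ(s) ≤ 2 / (s - 1)` give
`∑ p < N, p ^ (-s) ≤ log (2 log N)`. The difference `1 / p - p ^ (-s)` is at most
`(log p / p) / log N`, whose sum is bounded by `sum_log_div_le`. -/
lemma mertens_upper : ∃ C : ℝ, ∀ᶠ N : ℕ in atTop,
    ∑ p ∈ N.primesBelow, 1 / ((p : ℝ) - 1) ≤ Real.log (Real.log N) + C := by
  have hz : ∀ᶠ s : ℝ in nhdsWithin 1 (Set.Ioi 1), (s - 1) * ∑' n : ℕ, 1 / (n : ℝ) ^ s < 2 :=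
    tendsto_sub_mul_tsum_nat_rpow.eventually_lt_const (by norm_num)
  have hlog : Tendsto (fun N : ℕ => Real.log (N : ℝ)) atTop atTop :=
    Real.tendsto_log_atTop.comp tendsto_natCast_atTop_atTop
  have hs : Tendsto (fun N : ℕ => 1 + (Real.log (N : ℝ))⁻¹) atTop (nhdsWithin 1 (Set.Ioi 1)) := by
    refine tendsto_nhdsWithin_iff.2 ⟨?_, ?_⟩
    · simpa using (tendsto_inv_atTop_zero.comp hlog).const_add 1
    · filter_upwards [hlog.eventually_gt_atTop 0] with N hN
      have : 0 < (Real.log N)⁻¹ := by positivity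
      simpa using this
  refine ⟨Real.log 2 + 1 + Real.log 4 + 1, ?_⟩
  filter_upwards [hs.eventually hz, hlog.eventually_ge_atTop 1, eventually_ge_atTop 2]
    with N h1 h2 hN2
  set l := Real.log N with hl
  have hl0 : 0 < l := by linarith
  set s := 1 + l⁻¹ with hs
  have hs1 : 1 < s := by have : 0 < l⁻¹ := by positivity
                         linarith
  have h3 : ∑' n : ℕ, 1 / (n : ℝ) ^ s ≤ 2 * l := by
    have : s - 1 = l⁻¹ := by rw [hs]; ring
    rw [this, inv_mul_lt_iff₀ hl0] at h1
    linarith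
  have hpr : ∀ p ∈ N.primesBelow, p.Prime := fun p hp => Nat.prime_of_mem_primesBelow hp
  have h4 : ∏ p ∈ N.primesBelow, (1 - (p : ℝ) ^ (-s))⁻¹ ≤ ∑' n : ℕ, 1 / (n : ℝ) ^ s := by
    refine hasSum_le (fun n => ?_) (smooth_hasSum (by linarith) N)
      (Real.summable_one_div_nat_rpow.2 hs1).hasSum
    rw [one_div, ← Real.rpow_neg (Nat.cast_nonneg n)]
    exact Set.indicator_le_self' (fun _ _ => by positivity) n
  have h5 : Real.exp (∑ p ∈ N.primesBelow, (p : ℝ) ^ (-s)) ≤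
      ∏ p ∈ N.primesBelow, (1 - (p : ℝ) ^ (-s))⁻¹ := by
    rw [Real.exp_sum]
    refine Finset.prod_le_prod (fun p hp => (Real.exp_pos _).le) fun p hp => ?_
    have h6 : (p : ℝ) ^ (-s) < 1 :=
      Real.rpow_lt_one_of_one_lt_of_neg (by exact_mod_cast (hpr p hp).one_lt) (by linarith)
    rw [le_inv_comm₀ (Real.exp_pos _) (by linarith), ← Real.exp_neg]
    exact Real.one_sub_le_exp_neg _
  have h6 : ∑ p ∈ N.primesBelow, (p : ℝ) ^ (-s) ≤ Real.log 2 + Real.log l := by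
    rw [← Real.log_mul (by norm_num) hl0.ne', Real.le_log_iff_exp_le (by positivity)]
    linarith
  have h7 : ∑ p ∈ N.primesBelow, (1 / (p : ℝ) - (p : ℝ) ^ (-s)) ≤
      ∑ p ∈ N.primesBelow, (Real.log p / p) * l⁻¹ := by
    refine Finset.sum_le_sum fun p hp => ?_
    have hp0 : (0 : ℝ) < p := by exact_mod_cast (hpr p hp).pos
    have h8 : (p : ℝ) ^ (-s) = 1 / p * Real.exp (-(Real.log p * l⁻¹)) := by
      rw [hs, neg_add, Real.rpow_add hp0, Real.rpow_neg_one, one_div,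
        Real.rpow_def_of_pos hp0]
      congr 2
      ring
    rw [h8]
    have h9 := Real.one_sub_le_exp_neg (Real.log p * l⁻¹)
    calc 1 / (p : ℝ) - 1 / p * Real.exp (-(Real.log p * l⁻¹))
        = 1 / p * (1 - Real.exp (-(Real.log p * l⁻¹))) := by ring
      _ ≤ 1 / p * (Real.log p * l⁻¹) := by gcongr; linarith
      _ = _ := by ring
  rw [Finset.sum_sub_distrib, ← Finset.sum_mul] at h7
  have h10 : (∑ p ∈ N.primesBelow, Real.log p / p) * l⁻¹ ≤ 1 + Real.log 4 := by
    rw [← div_eq_mul_inv, div_le_iff₀ hl0]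
    have := sum_log_div_le (N := N) (by omega)
    have h4 : 0 ≤ Real.log 4 := Real.log_nonneg (by norm_num)
    nlinarith
  have := sum_inv_pred_sub_le N
  linarith

/-- Mertens' second theorem at real `t`, for the sums of `1 / (p - 1)`. -/
lemma mertens : ∃ C : ℝ, 0 < C ∧ ∃ t₀ : ℝ, ∀ t : ℝ, t₀ ≤ t →
    |∑ p ∈ ⌈t⌉₊.primesBelow, 1 / ((p : ℝ) - 1) - Real.log (Real.log t)| ≤ C := by
  obtain ⟨C, hC⟩ := mertens_upper
  obtain ⟨N₀, hN₀⟩ := Filter.eventually_atTop.1 hC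
  refine ⟨|C| + Real.log 2, by have := Real.log_pos (show (1 : ℝ) < 2 by norm_num); positivity,
    max N₀ 2, fun t ht => ?_⟩
  have ht2 : (2 : ℝ) ≤ t := le_trans (le_max_right _ _) ht
  have htN : (N₀ : ℝ) ≤ t := le_trans (le_max_left _ _) ht
  have hle : t ≤ ⌈t⌉₊ := Nat.le_ceil t
  have hlt : (⌈t⌉₊ : ℝ) < t + 1 := Nat.ceil_lt_add_one (by linarith)
  have h1 := hN₀ ⌈t⌉₊ (by exact_mod_cast htN.trans hle)
  have h2 := mertens_lower (N := ⌈t⌉₊) (by exact_mod_cast ht2.trans hle)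
  have hlt0 : 0 < Real.log t := Real.log_pos (by linarith)
  have h3 : Real.log (Real.log t) ≤ Real.log (Real.log ⌈t⌉₊) :=
    Real.log_le_log hlt0 (Real.log_le_log (by linarith) hle)
  have h4 : Real.log (Real.log ⌈t⌉₊) ≤ Real.log 2 + Real.log (Real.log t) := by
    rw [← Real.log_mul (by norm_num) hlt0.ne']
    have h5 : Real.log ⌈t⌉₊ ≤ 2 * Real.log t := by
      rw [← Real.log_rpow (by linarith)]
      apply Real.log_le_log (by linarith)
      rw [Real.rpow_two]
      nlinarith
    exact Real.log_le_log (by linarith [Real.log_le_log (by linarith) hle]) h5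
  rw [abs_le]
  have := Real.log_pos (show (1 : ℝ) < 2 by norm_num)
  constructor <;> linarith [le_abs_self C, abs_nonneg C]

/-! ### The second moment over the units modulo `M` -/

open Finset in
/-- The units counted form the kernel of the surjection `(ZMod M)ˣ → (ZMod d)ˣ`. -/
lemma card_units_cast_eq_one {M d : ℕ} [NeZero M] (h : d ∣ M) :
    ((univ.filter fun u : (ZMod M)ˣ => (((u : ZMod M).val : ℕ) : ZMod d) = 1).card : ℝ) =
      (M.totient : ℝ) * (1 / (d.totient : ℝ)) := by
  have hd : 0 < d := Nat.pos_of_dvd_of_pos h (NeZero.pos M)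
  have : NeZero d := ⟨hd.ne'⟩
  have h1 := Subgroup.card_mul_index (ZMod.unitsMap h).ker
  rw [Subgroup.index_ker, MonoidHom.range_eq_top.2 (ZMod.unitsMap_surjective h), Subgroup.card_top,
    Nat.card_eq_fintype_card (α := (ZMod d)ˣ), ZMod.card_units_eq_totient,
    Nat.card_eq_fintype_card (α := (ZMod M)ˣ), ZMod.card_units_eq_totient] at h1
  have h2 : (univ.filter fun u : (ZMod M)ˣ => (((u : ZMod M).val : ℕ) : ZMod d) = 1).card =
      Nat.card (ZMod.unitsMap h).ker := by
    rw [← Fintype.card_subtype, ← Nat.card_eq_fintype_card]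
    refine Nat.card_congr (Equiv.subtypeEquivRight fun u => ?_)
    rw [MonoidHom.mem_ker, ← Units.val_inj, ZMod.unitsMap_val]
    simp [ZMod.natCast_val]
  have h3 : (0 : ℝ) < d.totient := by exact_mod_cast Nat.totient_pos.2 hd
  rw [h2, ← h1]
  push_cast
  field_simp

open Finset in
/-- Pairwise independence of the events `u ≡ 1` modulo `q`, from the Chinese remainder theorem. -/
lemma card_units_cast_eq_one_pair {M q r : ℕ} [NeZero M] (hq : q.Prime) (hr : r.Prime)
    (hqr : q ≠ r) (hqM : q ∣ M) (hrM : r ∣ M) :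
    ((univ.filter fun u : (ZMod M)ˣ => (((u : ZMod M).val : ℕ) : ZMod q) = 1 ∧
      (((u : ZMod M).val : ℕ) : ZMod r) = 1).card : ℝ) =
      (M.totient : ℝ) * (1 / ((q : ℝ) - 1) * (1 / ((r : ℝ) - 1))) := by
  have hco : q.Coprime r := (Nat.coprime_primes hq hr).2 hqr
  have h := card_units_cast_eq_one (hco.mul_dvd_of_dvd_of_dvd hqM hrM)
  rw [Nat.totient_mul hco, Nat.totient_prime hq, Nat.totient_prime hr, Nat.cast_mul,
    Nat.cast_sub hq.one_le, Nat.cast_sub hr.one_le, Nat.cast_one] at h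
  rw [one_div_mul_one_div, ← h]
  congr 2
  ext u
  simp only [mem_filter, mem_univ, true_and]
  have key : ∀ n : ℕ, (((u : ZMod M).val : ℕ) : ZMod n) = 1 ↔ (u : ZMod M).val ≡ 1 [MOD n] :=
    fun n => by rw [← ZMod.natCast_eq_natCast_iff, Nat.cast_one]
  rw [key, key, key, Nat.modEq_and_modEq_iff_modEq_mul hco]

open Finset in
/-- Turán's computation on the units modulo `M`: `L` is arbitrary, and the variance of the count is
bounded by its mean because the events are pairwise independent. -/
lemma second_moment_units (P : Finset ℕ) (hP : ∀ q ∈ P, q.Prime) {M : ℕ} [NeZero M]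
    (hM : ∀ q ∈ P, q ∣ M) (L : ℝ) :
    ∑ u : (ZMod M)ˣ,
      (((P.filter fun q : ℕ => (((u : ZMod M).val : ℕ) : ZMod q) = 1).card : ℝ) - L) ^ 2 ≤
      M.totient * (∑ q ∈ P, 1 / ((q : ℝ) - 1) + (∑ q ∈ P, 1 / ((q : ℝ) - 1) - L) ^ 2) := by
  classical
  set a : ℕ → ℝ := fun q => 1 / ((q : ℝ) - 1) with ha
  set φ : ℝ := (M.totient : ℝ) with hφ
  let X : ℕ → (ZMod M)ˣ → ℝ := fun q u => if (((u : ZMod M).val : ℕ) : ZMod q) = 1 then 1 else 0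
  have hX : ∀ u : (ZMod M)ˣ,
      ((P.filter fun q : ℕ => (((u : ZMod M).val : ℕ) : ZMod q) = 1).card : ℝ) =
        ∑ q ∈ P, X q u := fun u => by
    rw [card_filter]; push_cast; rfl
  have h1 : ∀ q ∈ P, ∑ u, X q u = φ * a q := fun q hq => by
    have := card_units_cast_eq_one (hM q hq)
    rw [Nat.totient_prime (hP q hq), Nat.cast_sub (hP q hq).one_le, Nat.cast_one] at this
    rw [ha, ← this, card_filter]; push_cast; rfl
  have ha0 : ∀ q ∈ P, 0 ≤ a q := fun q hq => by
    have : (1 : ℝ) ≤ q := by exact_mod_cast (hP q hq).one_le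
    exact div_nonneg zero_le_one (by linarith)
  have hφ0 : 0 ≤ φ := Nat.cast_nonneg _
  -- On the diagonal `X q ^ 2 = X q`; the term `φ * a q ^ 2` is added there to complete the square.
  have h2 : ∀ q ∈ P, ∀ r ∈ P, ∑ u, X q u * X r u ≤ φ * (a q * a r) + if q = r then φ * a q else 0 := by
    intro q hq r hr
    split_ifs with hqr
    · subst hqr
      have : ∑ u, X q u * X q u = φ * a q := by
        rw [← h1 q hq]
        refine sum_congr rfl fun u _ => ?_
        simp only [X]; split_ifs <;> simp
      rw [this]
      have := mul_nonneg hφ0 (mul_nonneg (ha0 q hq) (ha0 q hq))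
      linarith
    · rw [add_zero]
      have := card_units_cast_eq_one_pair (hP q hq) (hP r hr) hqr (hM q hq) (hM r hr)
      rw [ha, ← this, card_filter]
      push_cast
      refine sum_le_sum fun u _ => ?_
      simp only [X]
      split_ifs <;> simp_all
  have hcard : ∑ _u : (ZMod M)ˣ, L ^ 2 = φ * L ^ 2 := by
    rw [sum_const, card_univ, ZMod.card_units_eq_totient, nsmul_eq_mul]
  have e1 : ∑ u, (∑ q ∈ P, X q u) ^ 2 ≤ φ * ((∑ q ∈ P, a q) ^ 2 + ∑ q ∈ P, a q) := by
    calc ∑ u, (∑ q ∈ P, X q u) ^ 2 = ∑ q ∈ P, ∑ r ∈ P, ∑ u, X q u * X r u := by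
          simp_rw [sq, sum_mul_sum]
          rw [sum_comm]
          exact sum_congr rfl fun q _ => sum_comm
      _ ≤ ∑ q ∈ P, ∑ r ∈ P, (φ * (a q * a r) + if q = r then φ * a q else 0) :=
          sum_le_sum fun q hq => sum_le_sum fun r hr => h2 q hq r hr
      _ = _ := by
          simp_rw [sum_add_distrib, sum_ite_eq]
          rw [mul_add, sq, sum_mul_sum, mul_sum, mul_sum]
          congr 1
          · exact sum_congr rfl fun q _ => (mul_sum _ _ _).symm
          · exact sum_congr rfl fun q hq => if_pos hq
  have e2 : ∑ u, ∑ q ∈ P, X q u = φ * ∑ q ∈ P, a q := by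
    rw [sum_comm, mul_sum]; exact sum_congr rfl h1
  calc _ = ∑ u, ((∑ q ∈ P, X q u) ^ 2 - 2 * L * (∑ q ∈ P, X q u) + L ^ 2) :=
        sum_congr rfl fun u _ => by rw [hX u]; ring
    _ = ∑ u, (∑ q ∈ P, X q u) ^ 2 - 2 * L * (φ * ∑ q ∈ P, a q) + φ * L ^ 2 := by
        rw [sum_add_distrib, sum_sub_distrib, ← mul_sum, e2, hcard]
    _ ≤ _ := by nlinarith [e1]

/-! ### Transfer to primes and Chebyshev's inequality -/

open Finset in
/-- A prime `q` divides `p - 1` exactly when `p` is `1` in `ZMod q`. -/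
lemma omegaLt_eq_card {t : ℝ} {p : ℕ} (hp : p.Prime) :
    omegaLt (p - 1) t = (⌈t⌉₊.primesBelow.filter fun q : ℕ => (p : ZMod q) = 1).card := by
  unfold omegaLt
  congr 1
  ext q
  have hp2 := hp.two_le
  have h1 : (p : ZMod q) = 1 ↔ q ∣ p - 1 := by
    rw [← Nat.modEq_iff_dvd' hp.one_le, ← ZMod.natCast_eq_natCast_iff, Nat.cast_one, eq_comm]
  simp only [mem_filter, Nat.mem_primeFactors, Nat.mem_primesBelow, h1, Nat.lt_ceil]
  have h2 : p - 1 ≠ 0 := by omega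
  tauto

lemma natCast_val_natCast {M q : ℕ} [NeZero M] (h : q ∣ M) (p : ℕ) :
    ((((p : ZMod M).val : ℕ)) : ZMod q) = (p : ZMod q) := by
  rw [ZMod.val_natCast, ZMod.natCast_eq_natCast_iff]
  exact (Nat.mod_modEq p M).of_dvd h

open Finset Filter in
/-- The second moment over primes up to `x`. The constant `W` is the contribution of the primes
below `t`, which are not units modulo `M`; the others are grouped by their class modulo `M`. -/
lemma second_moment_primes (t L : ℝ) : ∃ W : ℝ, ∀ᶠ x : ℕ in atTop,
    ∑ p ∈ (Icc 0 x).filter Nat.Prime, ((omegaLt (p - 1) t : ℝ) - L) ^ 2 ≤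
      W + (80 * Real.pi + 22) * (∑ q ∈ ⌈t⌉₊.primesBelow, 1 / ((q : ℝ) - 1) +
        (∑ q ∈ ⌈t⌉₊.primesBelow, 1 / ((q : ℝ) - 1) - L) ^ 2) * (Nat.primeCounting x : ℝ) := by
  classical
  set P := ⌈t⌉₊.primesBelow with hPdef
  have hP : ∀ q ∈ P, q.Prime := fun q hq => Nat.prime_of_mem_primesBelow hq
  set M := ∏ q ∈ P, q with hMdef
  have hM0 : M ≠ 0 := prod_ne_zero_iff.2 fun q hq => (hP q hq).ne_zero
  have : NeZero M := ⟨hM0⟩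
  have hM : ∀ q ∈ P, q ∣ M := fun q hq => dvd_prod_of_mem _ hq
  let f : ℕ → ℝ := fun p => ((omegaLt (p - 1) t : ℝ) - L) ^ 2
  let g : (ZMod M)ˣ → ℝ := fun u =>
    (((P.filter fun q : ℕ => (((u : ZMod M).val : ℕ) : ZMod q) = 1).card : ℝ) - L) ^ 2
  have hf0 : ∀ p, 0 ≤ f p := fun p => sq_nonneg _
  have hg0 : ∀ u, 0 ≤ g u := fun u => sq_nonneg _
  have hfg : ∀ p : ℕ, p.Prime → ∀ u : (ZMod M)ˣ, (p : ZMod M) = u → f p = g u := by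
    intro p hp u hu
    simp only [f, g, ← hu]
    rw [omegaLt_eq_card hp]
    congr 4
    refine filter_congr fun q hq => ?_
    rw [natCast_val_natCast (hM q hq)]
  refine ⟨∑ p ∈ M.primeFactors, f p, ?_⟩
  have hev : ∀ᶠ x : ℕ in atTop, ∀ u : (ZMod M)ˣ,
      (((Icc 0 x).filter fun p : ℕ => p.Prime ∧ (p : ZMod M) = u).card : ℝ) ≤
        (80 * Real.pi + 22) / M.totient * (Nat.primeCounting x : ℝ) :=
    eventually_all.2 fun u => prime_residue_le M u.isUnit
  filter_upwards [hev] with x hx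
  have hφ : (0 : ℝ) < M.totient := by exact_mod_cast Nat.totient_pos.2 (Nat.pos_of_ne_zero hM0)
  -- Every prime either divides `M` or lies in exactly one unit class.
  have hpt : ∀ p ∈ (Icc 0 x).filter Nat.Prime, f p ≤
      (if p ∈ M.primeFactors then f p else 0) +
        ∑ u : (ZMod M)ˣ, (if (p : ZMod M) = u then g u else 0) := by
    intro p hp
    have hpp := (mem_filter.1 hp).2
    have hs : ∀ u ∈ (univ : Finset (ZMod M)ˣ), 0 ≤ (if (p : ZMod M) = u then g u else 0) :=
      fun u _ => by split_ifs <;> [exact hg0 u; exact le_rfl]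
    by_cases hpM : p ∣ M
    · rw [if_pos (Nat.mem_primeFactors.2 ⟨hpp, hpM, hM0⟩)]
      linarith [sum_nonneg hs]
    · rw [if_neg fun h => hpM (Nat.dvd_of_mem_primeFactors h), zero_add]
      have hco : p.Coprime M := (hpp.coprime_iff_not_dvd).2 hpM
      refine le_trans ?_ (single_le_sum hs (mem_univ (ZMod.unitOfCoprime p hco)))
      rw [if_pos (ZMod.coe_unitOfCoprime p hco).symm]
      exact (hfg p hpp _ (ZMod.coe_unitOfCoprime p hco).symm).le
  have hA : ∑ p ∈ (Icc 0 x).filter Nat.Prime, (if p ∈ M.primeFactors then f p else 0) ≤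
      ∑ p ∈ M.primeFactors, f p := by
    rw [← sum_filter]
    refine sum_le_sum_of_subset_of_nonneg (fun p hp => (mem_filter.1 hp).2) fun p _ _ => hf0 p
  have hB : ∑ p ∈ (Icc 0 x).filter Nat.Prime,
      ∑ u : (ZMod M)ˣ, (if (p : ZMod M) = u then g u else 0) ≤
      (80 * Real.pi + 22) / M.totient * (Nat.primeCounting x : ℝ) * ∑ u, g u := by
    rw [sum_comm, mul_sum]
    refine sum_le_sum fun u _ => ?_
    rw [← sum_filter, sum_const, nsmul_eq_mul, filter_filter]
    exact mul_le_mul_of_nonneg_right (hx u) (hg0 u)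
  have hC := second_moment_units P hP hM L
  have hK : 0 ≤ (80 * Real.pi + 22) / M.totient * (Nat.primeCounting x : ℝ) := by positivity
  have hD := mul_le_mul_of_nonneg_left hC hK
  refine (sum_le_sum hpt).trans ?_
  rw [sum_add_distrib]
  refine (add_le_add hA (hB.trans hD)).trans (le_of_eq ?_)
  field_simp

theorem stmt12 :
    ∃ C : ℝ, 0 < C ∧ ∃ t₀ : ℝ, ∀ t : ℝ, t₀ ≤ t → ∃ x₀ : ℕ, ∀ x : ℕ, x₀ ≤ x →
      ∀ ξ : ℝ, 1 < ξ →
        ({p : ℕ | p ≤ x ∧ p.Prime ∧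
            ξ * Real.sqrt (Real.log (Real.log t)) ≤
              |(omegaLt (p - 1) t : ℝ) - Real.log (Real.log t)|}.ncard : ℝ) ≤
          C * ({p : ℕ | p ≤ x ∧ p.Prime}.ncard : ℝ) / ξ ^ 2 := by
  obtain ⟨C, hC, t₁, hmert⟩ := mertens
  refine ⟨1 + (80 * Real.pi + 22) * (1 + C + C ^ 2), by positivity,
    -- `t ≥ exp (exp 1)` ensures `log log t ≥ 1`.
    max t₁ (Real.exp (Real.exp 1)), fun t ht => ?_⟩
  set L := Real.log (Real.log t) with hL
  have hL1 : 1 ≤ L := by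
    have h1 : Real.exp 1 ≤ Real.log t :=
      (Real.le_log_iff_exp_le ((Real.exp_pos _).trans_le ((le_max_right _ _).trans ht))).2
        ((le_max_right _ _).trans ht)
    exact (Real.le_log_iff_exp_le ((Real.exp_pos _).trans_le h1)).2 h1
  have hμ := abs_le.1 (hmert t ((le_max_left _ _).trans ht))
  obtain ⟨W, hW⟩ := second_moment_primes t L
  have hlarge : ∀ᶠ x : ℕ in Filter.atTop, W ≤ (Nat.primeCounting x : ℝ) :=
    (tendsto_natCast_atTop_atTop.comp Nat.tendsto_primeCounting).eventually_ge_atTop W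
  obtain ⟨x₀, hx₀⟩ := Filter.eventually_atTop.1 (hW.and hlarge)
  refine ⟨x₀, fun x hx ξ hξ => ?_⟩
  obtain ⟨hsum, hWx⟩ := hx₀ x hx
  set μ := ∑ q ∈ ⌈t⌉₊.primesBelow, 1 / ((q : ℝ) - 1) with hμdef
  set S := (Finset.Icc 0 x).filter Nat.Prime with hS
  have hden : {p : ℕ | p ≤ x ∧ p.Prime}.ncard = Nat.primeCounting x := by
    rw [Nat.primeCounting, Nat.primeCounting', Nat.count_eq_card_filter_range,
      ← Set.ncard_coe_finset]
    congr 1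
    ext p
    simp
  have hnum : {p : ℕ | p ≤ x ∧ p.Prime ∧ ξ * Real.sqrt L ≤ |(omegaLt (p - 1) t : ℝ) - L|}.ncard =
      (S.filter fun p => ξ * Real.sqrt L ≤ |(omegaLt (p - 1) t : ℝ) - L|).card := by
    rw [← Set.ncard_coe_finset]
    congr 1
    ext p
    simp [hS, and_assoc]
  rw [hnum, hden, le_div_iff₀ (by positivity)]
  set B := S.filter fun p => ξ * Real.sqrt L ≤ |(omegaLt (p - 1) t : ℝ) - L| with hB
  -- Chebyshev's inequality
  have hmarkov : (B.card : ℝ) * (ξ ^ 2 * L) ≤ ∑ p ∈ S, ((omegaLt (p - 1) t : ℝ) - L) ^ 2 := by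
    rw [← nsmul_eq_mul]
    refine (Finset.card_nsmul_le_sum B _ _ fun p hp => ?_).trans
      (Finset.sum_le_sum_of_subset_of_nonneg (Finset.filter_subset _ _) fun p _ _ => sq_nonneg _)
    have h1 := (Finset.mem_filter.1 hp).2
    have h2 := pow_le_pow_left₀ (by positivity) h1 2
    rwa [mul_pow, Real.sq_sqrt (by linarith), sq_abs] at h2
  have hvar : μ + (μ - L) ^ 2 ≤ (1 + C + C ^ 2) * L := by
    have h1 : (μ - L) ^ 2 ≤ C ^ 2 := sq_le_sq' (by linarith) hμ.2
    nlinarith [mul_nonneg hC.le (sub_nonneg.2 hL1), mul_nonneg (sq_nonneg C) (sub_nonneg.2 hL1)]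
  have hπ : (0 : ℝ) ≤ Nat.primeCounting x := Nat.cast_nonneg _
  have htot : (B.card : ℝ) * ξ ^ 2 * L ≤
      (1 + (80 * Real.pi + 22) * (1 + C + C ^ 2)) * Nat.primeCounting x * L := by
    have hK : (0 : ℝ) ≤ 80 * Real.pi + 22 := by positivity
    have h1 := mul_le_mul_of_nonneg_right (mul_le_mul_of_nonneg_left hvar hK) hπ
    have h2 : W ≤ Nat.primeCounting x * L := hWx.trans (le_mul_of_one_le_right hπ hL1)
    linarith
  exact le_of_mul_le_mul_right htot (by linarith)
end

section
/- There exist a constant C > 0 and a₀ such that for every real a ≥ a₀ there is x₀ = x₀(a) with the following property: for all x ≥ x₀, the number of primes p ≤ x for which there exists some t with a < t < p−1 and ω(p−1, t) ≥ 2·(log log t)² is at most C·π(x)/(log log a)². -/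
/-! ### An upper-bound sieve of Selberg type -/

open Finset in
open scoped ArithmeticFunction.Moebius in
/-- Möbius inversion on the interval between `l` and `k` in the lattice of divisors of a squarefree
number: the Möbius function sums to `0` over it unless `l = k`. -/
theorem sum_moebius_interval {P l k : ℕ} (hP : Squarefree P) (hk : k ∣ P) :
    ∑ d ∈ P.divisors, (if l ∣ d ∧ d ∣ k then (μ d : ℝ) else 0) =
      if l = k then (μ l : ℝ) else 0 := by
  have hk0 : k ≠ 0 := ne_zero_of_dvd_ne_zero hP.ne_zero hk
  by_cases hlk : l ∣ k
  · obtain ⟨e, rfl⟩ := hlk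
    have hl0 : l ≠ 0 := left_ne_zero_of_mul hk0
    have he0 : e ≠ 0 := right_ne_zero_of_mul hk0
    have hsq : Squarefree (l * e) := hP.squarefree_of_dvd hk
    have hset : P.divisors.filter (fun d => l ∣ d ∧ d ∣ l * e) =
        e.divisors.image (fun f => l * f) := by
      ext d
      simp only [mem_filter, Nat.mem_divisors, mem_image]
      constructor
      · rintro ⟨-, ⟨f, rfl⟩, h⟩
        exact ⟨f, ⟨Nat.dvd_of_mul_dvd_mul_left (Nat.pos_of_ne_zero hl0) h, he0⟩, rfl⟩
      · rintro ⟨f, ⟨hf, -⟩, rfl⟩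
        have : l * f ∣ l * e := Nat.mul_dvd_mul_left l hf
        exact ⟨⟨this.trans hk, hP.ne_zero⟩, dvd_mul_right _ _, this⟩
    rw [← sum_filter, hset, sum_image (fun a _ b _ h => Nat.eq_of_mul_eq_mul_left
      (Nat.pos_of_ne_zero hl0) h)]
    have h1 : ∀ f ∈ e.divisors, (μ (l * f) : ℝ) = μ l * μ f := by
      intro f hf
      have hcop : l.Coprime f := (Nat.coprime_of_squarefree_mul hsq).coprime_dvd_right
        (Nat.dvd_of_mem_divisors hf)
      rw [ArithmeticFunction.isMultiplicative_moebius.map_mul_of_coprime hcop]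
      push_cast; ring
    rw [sum_congr rfl h1, ← mul_sum]
    have h2 : ∑ f ∈ e.divisors, (μ f : ℝ) = if e = 1 then 1 else 0 := by
      have := congrArg (fun g : ArithmeticFunction ℤ => g e)
        ArithmeticFunction.moebius_mul_coe_zeta
      simp only [ArithmeticFunction.coe_mul_zeta_apply, ArithmeticFunction.one_apply] at this
      exact_mod_cast this
    rw [h2]
    by_cases he : e = 1
    · simp [he]
    · have : l ≠ l * e := fun h => he (by
        have : l * 1 = l * e := by simpa using h
        exact (Nat.eq_of_mul_eq_mul_left (Nat.pos_of_ne_zero hl0) this).symm)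
      simp [he, this]
  · rw [sum_eq_zero, if_neg (by rintro rfl; exact hlk dvd_rfl)]
    intro d _
    exact if_neg fun h => hlk (h.1.trans h.2)

open Finset in
/-- Selberg's upper bound. The weights are
`w d = μ(d) ν(d)⁻¹ T(d) / S`, where `S` is the sum of the Selberg terms over `d ≤ z` and `T(d)` is
the part of that sum supported on multiples of `d`. The weights vanish for `d > z` and minimise the
quadratic form of the main term, which takes the value `1 / S`. Since `|w d| ≤ ν(d)⁻¹`, remainders
bounded by `1` contribute at most the square of `∑ ν(d)⁻¹`. This is cruder than the usual
`|w d| ≤ 1`, but enough when `z` is a small power of the length of the sequence. -/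
theorem selberg_bound (s : BoundingSieve) (z : ℕ) (hz : 1 ≤ z)
    (hrem : ∀ d, d ∣ s.prodPrimes → |s.rem d| ≤ 1) :
    s.siftedSum ≤
      s.totalMass / (∑ d ∈ s.prodPrimes.divisors with d ≤ z, s.selbergTerms d) +
        (∑ d ∈ s.prodPrimes.divisors with d ≤ z, (s.nu d)⁻¹) ^ 2 := by
  classical
  set P := s.prodPrimes with hPdef
  have hP : Squarefree P := s.prodPrimes_squarefree
  set D := P.divisors.filter (· ≤ z) with hD
  set S := ∑ d ∈ D, s.selbergTerms d with hS
  have hpos : ∀ d ∈ D, 0 < s.selbergTerms d := fun d hd =>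
    BoundingSieve.selbergTerms_pos (Nat.dvd_of_mem_divisors (mem_filter.1 hd).1)
  have h1D : 1 ∈ D := by simp [hD, hz, hP.ne_zero]
  have hSpos : 0 < S := sum_pos hpos ⟨1, h1D⟩
  let T : ℕ → ℝ := fun d => ∑ k ∈ D, if d ∣ k then s.selbergTerms k else 0
  let w : ℕ → ℝ := fun d => (ArithmeticFunction.moebius d : ℝ) * (s.nu d)⁻¹ * (T d / S)
  have hT0 : ∀ d, 0 ≤ T d := fun d => sum_nonneg fun k hk => by
    split_ifs
    exacts [(hpos k hk).le, le_rfl]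
  have hTS : ∀ d, T d ≤ S := fun d => sum_le_sum fun k hk => by
    split_ifs
    exacts [le_rfl, (hpos k hk).le]
  have hT1 : T 1 = S := by simp [T, S]
  have hw1 : w 1 = 1 := by
    simp only [w, hT1, s.nu_mult.map_one]
    simp [hSpos.ne']
  have hTz : ∀ d, ¬ d ≤ z → T d = 0 := fun d hd => sum_eq_zero fun k hk => by
    refine if_neg fun h => hd ?_
    have hk' := mem_filter.1 hk
    exact (Nat.le_of_dvd (Nat.pos_of_mem_divisors hk'.1) h).trans hk'.2
  have hwabs : ∀ d ∈ P.divisors, |w d| ≤ if d ≤ z then (s.nu d)⁻¹ else 0 := by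
    intro d hd
    have hnu : 0 < s.nu d := BoundingSieve.nu_pos_of_dvd_prodPrimes (Nat.dvd_of_mem_divisors hd)
    split_ifs with h
    · have hμ : |(ArithmeticFunction.moebius d : ℝ)| ≤ 1 := by
        exact_mod_cast ArithmeticFunction.abs_moebius_le_one
      have h3 : |T d / S| ≤ 1 := by
        rw [abs_of_nonneg (div_nonneg (hT0 d) hSpos.le)]
        exact (div_le_one hSpos).2 (hTS d)
      simp only [w]
      rw [abs_mul, abs_mul, abs_of_pos (inv_pos.2 hnu)]
      have : 0 < (s.nu d)⁻¹ := inv_pos.2 hnu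
      calc |(ArithmeticFunction.moebius d : ℝ)| * (s.nu d)⁻¹ * |T d / S|
          ≤ 1 * (s.nu d)⁻¹ * 1 := by gcongr
        _ = _ := by ring
    · simp [w, hTz d h]
  have hmain : s.mainSum (BoundingSieve.lambdaSquared w) = 1 / S := by
    rw [BoundingSieve.mainSum_lambdaSquared_eq_sum_mul_sum_sq]
    -- The linear forms of the diagonalisation are evaluated by Möbius inversion.
    have hinner : ∀ l ∈ P.divisors,
        (∑ d ∈ P.divisors, if l ∣ d then s.nu d * w d else 0) =
          if l ∈ D then (ArithmeticFunction.moebius l : ℝ) * s.selbergTerms l / S else 0 := by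
      intro l hl
      have e1 : (∑ d ∈ P.divisors, if l ∣ d then s.nu d * w d else 0) =
          ∑ k ∈ D, s.selbergTerms k / S * ∑ d ∈ P.divisors,
            (if l ∣ d ∧ d ∣ k then (ArithmeticFunction.moebius d : ℝ) else 0) := by
        simp_rw [mul_sum]
        rw [sum_comm]
        refine sum_congr rfl fun d hd => ?_
        have hnu : s.nu d ≠ 0 :=
          BoundingSieve.nu_ne_zero (Nat.dvd_of_mem_divisors hd)
        by_cases hld : l ∣ d
        · simp only [hld, if_true, true_and, w, T]
          rw [sum_div, mul_sum, mul_sum]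
          refine sum_congr rfl fun k _ => ?_
          split_ifs
          · field_simp
          · simp
        · simp [hld]
      rw [e1, sum_congr rfl fun k hk => by
        rw [sum_moebius_interval hP (Nat.dvd_of_mem_divisors (mem_filter.1 hk).1)]]
      simp only [mul_ite, mul_zero, sum_ite_eq]
      split_ifs
      · ring
      · rfl
    rw [sum_congr rfl fun l hl => by rw [hinner l hl]]
    have e2 : ∀ l ∈ P.divisors, (s.selbergTerms l)⁻¹ *
        (if l ∈ D then (ArithmeticFunction.moebius l : ℝ) * s.selbergTerms l / S else 0) ^ 2 =
        if l ∈ D then s.selbergTerms l / S ^ 2 else 0 := by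
      intro l hl
      split_ifs with h
      · have h0 := (hpos l h).ne'
        have hsq : Squarefree l := hP.squarefree_of_dvd (Nat.dvd_of_mem_divisors hl)
        have hμ : (ArithmeticFunction.moebius l : ℝ) ^ 2 = 1 := by
          exact_mod_cast ArithmeticFunction.moebius_sq_eq_one_of_squarefree hsq
        rw [div_pow, mul_pow, hμ]
        field_simp
      · simp
    rw [sum_congr rfl e2, ← sum_filter, ← sum_div]
    have : P.divisors.filter (· ∈ D) = D := by
      ext l; simp +contextual [hD]
    rw [this, ← hS]
    field_simp
  have herr : s.errSum (BoundingSieve.lambdaSquared w) ≤ (∑ d ∈ D, (s.nu d)⁻¹) ^ 2 := by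
    have hW : ∑ d ∈ P.divisors, |w d| ≤ ∑ d ∈ D, (s.nu d)⁻¹ := by
      rw [hD, sum_filter]
      exact sum_le_sum hwabs
    calc s.errSum (BoundingSieve.lambdaSquared w)
        ≤ ∑ d ∈ P.divisors, |BoundingSieve.lambdaSquared w d| := by
          refine sum_le_sum fun d hd => ?_
          exact mul_le_of_le_one_right (abs_nonneg _) (hrem d (Nat.dvd_of_mem_divisors hd))
      _ ≤ ∑ d ∈ P.divisors, ∑ d1 ∈ P.divisors, ∑ d2 ∈ P.divisors,
            if d = Nat.lcm d1 d2 then |w d1| * |w d2| else 0 := by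
          -- `lambdaSquared` sums over divisors of `d`; extend both sums to all divisors of `P`.
          refine sum_le_sum fun d hd => ?_
          have hsub : d.divisors ⊆ P.divisors :=
            Nat.divisors_subset_of_dvd hP.ne_zero (Nat.dvd_of_mem_divisors hd)
          have hnn : ∀ d1 d2, 0 ≤ if d = Nat.lcm d1 d2 then |w d1| * |w d2| else 0 :=
            fun d1 d2 => by split_ifs <;> positivity
          refine (abs_sum_le_sum_abs _ _).trans ?_
          refine le_trans ?_ (sum_le_sum_of_subset_of_nonneg hsub
            fun d1 _ _ => sum_nonneg fun d2 _ => hnn d1 d2)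
          refine sum_le_sum fun d1 _ => (abs_sum_le_sum_abs _ _).trans ?_
          refine le_trans ?_ (sum_le_sum_of_subset_of_nonneg hsub fun d2 _ _ => hnn d1 d2)
          refine sum_le_sum fun d2 _ => ?_
          split_ifs
          · rw [abs_mul]
          · simp
      _ = ∑ d1 ∈ P.divisors, ∑ d2 ∈ P.divisors, ∑ d ∈ P.divisors,
            if d = Nat.lcm d1 d2 then |w d1| * |w d2| else 0 := by
          rw [sum_comm]
          exact sum_congr rfl fun d1 _ => sum_comm
      _ ≤ ∑ d1 ∈ P.divisors, ∑ d2 ∈ P.divisors, |w d1| * |w d2| := by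
          refine sum_le_sum fun d1 _ => sum_le_sum fun d2 _ => ?_
          rw [sum_ite_eq']
          split_ifs
          · rfl
          · positivity
      _ = (∑ d ∈ P.divisors, |w d|) ^ 2 := by rw [sq, sum_mul_sum]
      _ ≤ _ := by gcongr
  have := BoundingSieve.siftedSum_le_mainSum_errSum_of_upperMoebius (s := s) _
    (BoundingSieve.upperMoebius_lambdaSquared w hw1)
  rw [hmain, mul_one_div] at this
  linarith

/-! ### The Brun–Titchmarsh inequality for the residue class of one -/

open Finset in
/-- Lower bound for the main term of the sieve. Every `n ≤ z` can be written `d * g * b ^ 2` with `d`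
squarefree and coprime to `m` and with `g ∣ m`, so the harmonic sum is at most the product of the
sums of `1 / d`, `1 / g` and `1 / b ^ 2`. The last two are at most the number of divisors of `m` and
`2`. -/
theorem log_le_sum_inv_squarefree (m z : ℕ) (hm : m ≠ 0) :
    Real.log (z + 1) ≤ 2 * m.divisors.card *
      ∑ d ∈ (Icc 1 z).filter (fun d => Squarefree d ∧ d.Coprime m), (d : ℝ)⁻¹ := by
  classical
  set D := (Icc 1 z).filter (fun d => Squarefree d ∧ d.Coprime m) with hD
  have h1 : Real.log (z + 1) ≤ ∑ n ∈ Icc 1 z, (n : ℝ)⁻¹ := by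
    have := log_add_one_le_harmonic z
    rw [harmonic_eq_sum_Icc] at this
    push_cast at this
    exact this
  -- Write `n = s * b ^ 2` with `s` squarefree, and take `g = gcd s m` and `d = s / g`.
  have h2 : Icc 1 z ⊆ (D ×ˢ m.divisors ×ˢ Icc 1 z).image
      (fun t => t.1 * (t.2.1 * t.2.2 ^ 2)) := by
    intro n hn
    obtain ⟨hn1, hnz⟩ := mem_Icc.1 hn
    obtain ⟨s, b, hsb, hs⟩ := Nat.sq_mul_squarefree n
    have hs0 : s ≠ 0 := hs.ne_zero
    have hb0 : b ≠ 0 := by rintro rfl; simp at hsb; omega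
    obtain ⟨d, hd⟩ := Nat.gcd_dvd_left s m
    set g := Nat.gcd s m with hg
    have hsq : Squarefree (g * d) := hd ▸ hs
    have hd0 : d ≠ 0 := by rintro rfl; simp at hd; exact hs0 hd
    have hg0 : g ≠ 0 := by rintro h; rw [h] at hd; simp at hd; exact hs0 hd
    have hgd : g.Coprime d := Nat.coprime_of_squarefree_mul hsq
    have hdn : d ∣ n := by
      rw [← hsb, hd]; exact (dvd_mul_left d g).mul_left _
    have hbn : b ∣ n := by
      rw [← hsb]; exact (dvd_pow_self b two_ne_zero).mul_right _
    have hdm : d.Coprime m := by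
      have h3 : Nat.gcd d m ∣ g :=
        Nat.dvd_gcd ((Nat.gcd_dvd_left d m).trans (hd ▸ dvd_mul_left d g)) (Nat.gcd_dvd_right d m)
      exact Nat.eq_one_of_dvd_coprimes hgd h3 (Nat.gcd_dvd_left d m)
    refine mem_image.2 ⟨(d, g, b), ?_, ?_⟩
    · simp only [mem_product, hD, mem_filter, mem_Icc, Nat.mem_divisors]
      exact ⟨⟨⟨by omega, (Nat.le_of_dvd hn1 hdn).trans hnz⟩, hsq.squarefree_of_dvd
        (dvd_mul_left d g), hdm⟩, ⟨Nat.gcd_dvd_right s m, hm⟩, by omega,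
        (Nat.le_of_dvd hn1 hbn).trans hnz⟩
    · simp only
      rw [← hsb]
      conv_rhs => rw [hd]
      ring
  have h3 : ∑ n ∈ Icc 1 z, (n : ℝ)⁻¹ ≤ ∑ t ∈ D ×ˢ m.divisors ×ˢ Icc 1 z,
      ((t.1 : ℝ)⁻¹ * ((t.2.1 : ℝ)⁻¹ * ((t.2.2 : ℝ) ^ 2)⁻¹)) := by
    refine (sum_le_sum_of_subset_of_nonneg h2 fun _ _ _ => by positivity).trans ?_
    refine (sum_image_le_of_nonneg (fun _ _ => by positivity)).trans (le_of_eq ?_)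
    refine sum_congr rfl fun t _ => ?_
    push_cast
    simp only [mul_inv]
  have h4 : ∑ t ∈ D ×ˢ m.divisors ×ˢ Icc 1 z,
      ((t.1 : ℝ)⁻¹ * ((t.2.1 : ℝ)⁻¹ * ((t.2.2 : ℝ) ^ 2)⁻¹)) =
      (∑ d ∈ D, (d : ℝ)⁻¹) * ((∑ g ∈ m.divisors, (g : ℝ)⁻¹) * ∑ b ∈ Icc 1 z, ((b : ℝ) ^ 2)⁻¹) := by
    rw [sum_mul_sum, ← sum_product', sum_mul_sum, ← sum_product']
  have h5 : ∑ g ∈ m.divisors, (g : ℝ)⁻¹ ≤ m.divisors.card := by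
    rw [card_eq_sum_ones, Nat.cast_sum]
    refine sum_le_sum fun g hg => ?_
    have : (1 : ℝ) ≤ g := by exact_mod_cast Nat.pos_of_mem_divisors hg
    simpa using inv_le_one_of_one_le₀ this
  have h6 : ∑ b ∈ Icc 1 z, ((b : ℝ) ^ 2)⁻¹ ≤ 2 := by
    have := sum_Ioo_inv_sq_le (α := ℝ) 0 (z + 1)
    have e : Ioo 0 (z + 1) = Icc 1 z := by ext; simp; omega
    rw [e] at this
    simpa using this
  have hD0 : 0 ≤ ∑ d ∈ D, (d : ℝ)⁻¹ := sum_nonneg fun _ _ => by positivity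
  calc Real.log (z + 1) ≤ _ := h1
    _ ≤ _ := h3
    _ = _ := h4
    _ ≤ (∑ d ∈ D, (d : ℝ)⁻¹) * (m.divisors.card * 2) := by gcongr
    _ = _ := by ring

open Finset in
theorem abs_card_modEq_sub_le (x r v : ℕ) (hr : 0 < r) :
    |((((Ioc 0 x).filter (fun n => n ≡ v [MOD r])).card : ℝ)) - (x : ℝ) / r| ≤ 1 := by
  have h := Nat.Ioc_filter_modEq_card 0 x hr v
  have hmono : ⌊((0 : ℕ) - v) / (r : ℚ)⌋ ≤ ⌊(x - v) / (r : ℚ)⌋ := by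
    apply Int.floor_mono
    gcongr
    exact_mod_cast Nat.zero_le x
  rw [max_eq_left (by linarith)] at h
  have a1 := Int.floor_le (((x : ℚ) - v) / (r : ℚ))
  have a2 := Int.lt_floor_add_one (((x : ℚ) - v) / (r : ℚ))
  have b1 := Int.floor_le ((((0 : ℕ) : ℚ) - v) / (r : ℚ))
  have b2 := Int.lt_floor_add_one ((((0 : ℕ) : ℚ) - v) / (r : ℚ))
  have hc : ((((Ioc 0 x).filter (fun n => n ≡ v [MOD r])).card : ℤ) : ℚ) =
      ⌊((x : ℚ) - v) / (r : ℚ)⌋ - ⌊(((0 : ℕ) : ℚ) - v) / (r : ℚ)⌋ := by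
    rw [h]; push_cast; rfl
  have hd : ((x : ℚ) - v) / (r : ℚ) = (x : ℚ) / r + (((0 : ℕ) : ℚ) - v) / (r : ℚ) := by
    push_cast; ring
  have : |((((Ioc 0 x).filter (fun n => n ≡ v [MOD r])).card : ℚ)) - (x : ℚ) / r| ≤ 1 := by
    rw [abs_le]
    push_cast at hc hd ⊢ a1 a2 b1 b2
    constructor <;> linarith
  have := (Rat.cast_le (K := ℝ)).2 this
  push_cast at this
  exact this

open Finset in
/-- A Brun–Titchmarsh inequality with an explicit sieve level `z`. The integers `n ≡ 1` modulo `m`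
are sifted by the primes up to `z` not dividing `m`; primes up to `z` may be sifted out and account
for the summand `z`. The factor `m.divisors.card` replaces the `m / φ(m)` of the usual statement and
is harmless for products of two primes. -/
theorem card_primes_modEq_one_le (x m z : ℕ) (hm : m ≠ 0) (hz : 1 ≤ z) :
    (((Ioc 0 x).filter (fun p => p.Prime ∧ p ≡ 1 [MOD m])).card : ℝ) ≤
      2 * m.divisors.card * ((x : ℝ) / m) / Real.log (z + 1) + z + (z : ℝ) ^ 4 := by
  classical
  set P := ∏ p ∈ (Icc 1 z).filter (fun p => p.Prime ∧ p.Coprime m), p with hP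
  have hPsq : Squarefree P := by
    refine squarefree_prod_of_pairwise_isCoprime (fun p hp q hq hpq => ?_) fun p hp =>
      (mem_filter.1 hp).2.1.prime.squarefree
    exact Nat.coprime_iff_isRelPrime.1
      ((Nat.coprime_primes (mem_filter.1 hp).2.1 (mem_filter.1 hq).2.1).2 hpq)
  have hPm : P.Coprime m := by
    rw [hP, Nat.coprime_prod_left_iff]
    exact fun p hp => (mem_filter.1 hp).2.2
  let s : BoundingSieve :=
    { support := (Ioc 0 x).filter (fun n => n ≡ 1 [MOD m])
      prodPrimes := P
      prodPrimes_squarefree := hPsq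
      weights := fun _ => 1
      weights_nonneg := fun _ => zero_le_one
      totalMass := (x : ℝ) / m
      nu := ⟨fun n => (n : ℝ)⁻¹, by simp⟩
      nu_mult := ⟨by simp, fun {a b} _ => by simp [mul_comm]⟩
      nu_pos_of_prime := fun p hp _ => by
        have := hp.pos
        simp only [ArithmeticFunction.coe_mk]
        positivity
      nu_lt_one_of_prime := fun p hp _ => by
        have : (1 : ℝ) < p := by exact_mod_cast hp.one_lt
        simpa using inv_lt_one_of_one_lt₀ this }
  have hnu : ∀ d, s.nu d = (d : ℝ)⁻¹ := fun d => rfl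
  have hsP : s.prodPrimes = P := rfl
  -- By the Chinese remainder theorem the multiples of `d` form one residue class modulo `m * d`.
  have hrem : ∀ d, d ∣ s.prodPrimes → |s.rem d| ≤ 1 := by
    intro d hd
    have hd0 : 0 < d := Nat.pos_of_ne_zero (ne_zero_of_dvd_ne_zero hPsq.ne_zero hd)
    have hdm : m.Coprime d := (hPm.coprime_dvd_left hd).symm
    let v := Nat.chineseRemainder hdm 1 0
    have e : s.multSum d = ((Ioc 0 x).filter (fun n => n ≡ v [MOD (m * d)])).card := by
      simp only [BoundingSieve.multSum, s]
      rw [← sum_filter, filter_filter]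
      simp only [sum_const, nsmul_eq_mul, mul_one]
      congr 2
      ext n
      simp only [mem_filter, and_congr_right_iff]
      intro _
      rw [← Nat.modEq_and_modEq_iff_modEq_mul hdm, ← Nat.modEq_zero_iff_dvd]
      constructor
      · rintro ⟨h1, h2⟩
        exact ⟨h1.trans v.2.1.symm, h2.trans v.2.2.symm⟩
      · rintro ⟨h1, h2⟩
        exact ⟨h1.trans v.2.1, h2.trans v.2.2⟩
    have e2 : s.rem d = ((Ioc 0 x).filter (fun n => n ≡ v [MOD (m * d)])).card -
        (x : ℝ) / (m * d : ℕ) := by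
      rw [BoundingSieve.rem, e, hnu]
      simp only [s]
      push_cast
      field_simp
    rw [e2]
    exact abs_card_modEq_sub_le x (m * d) v (Nat.mul_pos (Nat.pos_of_ne_zero hm) hd0)
  have hsel := selberg_bound s z hz hrem
  -- Each Selberg term is at least `1 / d`, and every squarefree `d ≤ z` coprime to `m` occurs.
  have hD : (Icc 1 z).filter (fun d => Squarefree d ∧ d.Coprime m) ⊆
      s.prodPrimes.divisors.filter (· ≤ z) := by
    intro d hd
    obtain ⟨hd1, hd2, hd3⟩ := mem_filter.1 hd
    obtain ⟨hd4, hd5⟩ := mem_Icc.1 hd1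
    simp only [mem_filter, Nat.mem_divisors]
    refine ⟨⟨?_, hPsq.ne_zero⟩, hd5⟩
    rw [hsP, ← Nat.prod_primeFactors_of_squarefree hd2, hP]
    refine prod_dvd_prod_of_subset _ _ _ fun p hp => ?_
    have hpp := Nat.prime_of_mem_primeFactors hp
    have hpd := Nat.dvd_of_mem_primeFactors hp
    simp only [mem_filter, mem_Icc]
    exact ⟨⟨hpp.one_le, (Nat.le_of_dvd hd4 hpd).trans hd5⟩, hpp, hd3.coprime_dvd_left hpd⟩
  have hS : Real.log (z + 1) ≤ 2 * m.divisors.card *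
      ∑ d ∈ s.prodPrimes.divisors.filter (· ≤ z), s.selbergTerms d := by
    refine (log_le_sum_inv_squarefree m z hm).trans ?_
    gcongr
    refine le_trans (sum_le_sum_of_subset_of_nonneg hD fun _ _ _ => by positivity) ?_
    refine sum_le_sum fun d hd => ?_
    have hdP := Nat.dvd_of_mem_divisors (mem_filter.1 hd).1
    rw [BoundingSieve.selbergTerms_apply, hnu]
    refine le_mul_of_one_le_right (by positivity) (Finset.one_le_prod fun p hp => ?_)
    have hpp := Nat.prime_of_mem_primeFactors hp
    have h1 := s.nu_lt_one_of_prime p hpp ((Nat.dvd_of_mem_primeFactors hp).trans hdP)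
    have h2 := s.nu_pos_of_prime p hpp ((Nat.dvd_of_mem_primeFactors hp).trans hdP)
    exact (one_le_inv₀ (by linarith)).2 (by linarith)
  set S := ∑ d ∈ s.prodPrimes.divisors.filter (· ≤ z), s.selbergTerms d with hSdef
  have hlog : 0 < Real.log (z + 1) := Real.log_pos (by
    have : (1 : ℝ) ≤ z := by exact_mod_cast hz
    linarith)
  have hcard : (0 : ℝ) < 2 * m.divisors.card := by
    have : 0 < m.divisors.card := card_pos.2 ⟨1, by simp [hm]⟩
    positivity
  have hSpos : 0 < S := by
    by_contra h
    push Not at h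
    nlinarith
  have hmain : s.totalMass / S ≤ 2 * m.divisors.card * ((x : ℝ) / m) / Real.log (z + 1) := by
    rw [div_le_div_iff₀ hSpos hlog]
    have : 0 ≤ (x : ℝ) / m := by positivity
    calc s.totalMass * Real.log (z + 1) = (x : ℝ) / m * Real.log (z + 1) := rfl
      _ ≤ (x : ℝ) / m * (2 * m.divisors.card * S) := by gcongr
      _ = _ := by ring
  have herr : (∑ d ∈ s.prodPrimes.divisors with d ≤ z, (s.nu d)⁻¹) ^ 2 ≤ (z : ℝ) ^ 4 := by
    have h1 : ∑ d ∈ s.prodPrimes.divisors with d ≤ z, (s.nu d)⁻¹ ≤ ∑ d ∈ Icc 1 z, (z : ℝ) := by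
      have hsub : s.prodPrimes.divisors.filter (· ≤ z) ⊆ Icc 1 z := fun d hd => by
        have := mem_filter.1 hd
        exact mem_Icc.2 ⟨Nat.pos_of_mem_divisors this.1, this.2⟩
      refine (sum_le_sum fun d hd => ?_).trans
        (sum_le_sum_of_subset_of_nonneg hsub fun _ _ _ => by positivity)
      rw [hnu, inv_inv]
      exact_mod_cast (mem_filter.1 hd).2
    have h0 : 0 ≤ ∑ d ∈ s.prodPrimes.divisors with d ≤ z, (s.nu d)⁻¹ :=
      sum_nonneg fun d _ => by rw [hnu, inv_inv]; positivity
    have h2 : ∑ d ∈ Icc 1 z, (z : ℝ) = (z : ℝ) ^ 2 := by simp [sq]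
    calc _ ≤ ((z : ℝ) ^ 2) ^ 2 := by rw [← h2]; gcongr
      _ = _ := by ring
  have hcount : (((Ioc 0 x).filter (fun p => p.Prime ∧ p ≡ 1 [MOD m])).card : ℝ) ≤
      z + s.siftedSum := by
    have hs : s.siftedSum =
        (((Ioc 0 x).filter (fun n => n ≡ 1 [MOD m])).filter (fun n => P.Coprime n)).card := by
      simp only [BoundingSieve.siftedSum, s]
      rw [← sum_filter]; simp
    rw [hs]
    have hsub : (Ioc 0 x).filter (fun p => p.Prime ∧ p ≡ 1 [MOD m]) ⊆ Icc 1 z ∪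
        ((Ioc 0 x).filter (fun n => n ≡ 1 [MOD m])).filter (fun n => P.Coprime n) := by
      intro p hp
      obtain ⟨hp1, hp2, hp3⟩ := mem_filter.1 hp
      rw [mem_union]
      by_cases hpz : p ≤ z
      · exact Or.inl (mem_Icc.2 ⟨hp2.one_le, hpz⟩)
      · refine Or.inr (mem_filter.2 ⟨mem_filter.2 ⟨hp1, hp3⟩, ?_⟩)
        rw [hP, Nat.coprime_prod_left_iff]
        intro q hq
        obtain ⟨hq1, hq2, -⟩ := mem_filter.1 hq
        refine (Nat.coprime_primes hq2 hp2).2 ?_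
        rintro rfl
        exact hpz (mem_Icc.1 hq1).2
    have := (card_le_card hsub).trans (card_union_le _ _)
    rw [Nat.card_Icc, Nat.add_sub_cancel] at this
    exact_mod_cast this
  linarith

/-! ### Chebyshev and Mertens bounds -/

theorem le_four_mul_primeCounting_mul_log (x : ℕ) (hx : 16 ≤ x) :
    (x : ℝ) ≤ 4 * (Nat.primeCounting x * Real.log x) := by
  have hx' : (16 : ℝ) ≤ x := by exact_mod_cast hx
  have hlog : 0 < Real.log x := Real.log_pos (by linarith)
  have h := Chebyshev.pi_ge x
  rw [div_le_iff₀ hlog] at h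
  have h2 := Real.log_two_gt_d9
  have h3 := Real.log_two_lt_d9
  -- The tangent to the logarithm at `16` absorbs the error term of the Chebyshev bound.
  have h4 : Real.log (x + 1) ≤ (x + 1) / 16 - 1 + 4 * Real.log 2 := by
    have e : Real.log ((x + 1) / 16) = Real.log (x + 1) - 4 * Real.log 2 := by
      rw [Real.log_div (by positivity) (by norm_num), show (16 : ℝ) = 2 ^ 4 by norm_num,
        Real.log_pow]
      norm_num
    have := Real.log_le_sub_one_of_pos (show (0 : ℝ) < (x + 1) / 16 by positivity)
    linarith
  nlinarith

open Finset in
/-- The number of primes `p ≤ x` with `p ≡ 1` modulo `q * r` is `O(π(x) / (q r))`, for distinct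
primes `q`, `r` up to `x ^ (1 / 4)`. The parameter `u` stands for `x ^ (1 / 16)`: the modulus is at
most `u ^ 8`, the sieve level is `⌊u⌋`, so the sieve error is at most `2 * u ^ 4`, far below the
main term `x / (q r log u) ≥ u ^ 8 / log u`. -/
theorem card_primes_modEq_mul_le (x : ℕ) (u : ℝ) (hx : 16 ≤ x) (hu : 1 ≤ u) (hux : u ^ 16 = x)
    (q r : ℕ) (hq : q.Prime) (hr : r.Prime) (hqr : q ≠ r) (hqu : (q : ℝ) ≤ u ^ 4)
    (hru : (r : ℝ) ≤ u ^ 4) :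
    (((Ioc 0 x).filter (fun p => p.Prime ∧ p ≡ 1 [MOD (q * r)])).card : ℝ) ≤
      544 * Nat.primeCounting x * ((q : ℝ)⁻¹ * (r : ℝ)⁻¹) := by
  have hm : q * r ≠ 0 := mul_ne_zero hq.ne_zero hr.ne_zero
  have hz : 1 ≤ ⌊u⌋₊ := (Nat.one_le_floor_iff u).2 hu
  have h := card_primes_modEq_one_le x (q * r) ⌊u⌋₊ hm hz
  have hdiv : (q * r).divisors.card = 4 := by
    rw [((Nat.coprime_primes hq hr).2 hqr).card_divisors_mul, hq.divisors, hr.divisors,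
      card_pair hq.one_lt.ne, card_pair hr.one_lt.ne]
  rw [hdiv] at h
  push_cast at h
  have hx' : (16 : ℝ) ≤ x := by exact_mod_cast hx
  have hu1 : 1 < u := by
    by_contra hcon
    have : u = 1 := le_antisymm (not_lt.1 hcon) hu
    rw [this] at hux
    norm_num at hux
    linarith
  have hlogu : 0 < Real.log u := Real.log_pos hu1
  have hlogx : Real.log x = 16 * Real.log u := by
    rw [← hux, Real.log_pow]; norm_num
  have hfl : (⌊u⌋₊ : ℝ) ≤ u := Nat.floor_le (by linarith)
  have hfl1 : (1 : ℝ) ≤ (⌊u⌋₊ : ℝ) := by exact_mod_cast hz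
  have hlogz : Real.log u ≤ Real.log (⌊u⌋₊ + 1) :=
    Real.log_le_log (by linarith) (Nat.lt_floor_add_one u).le
  have hmpos : (0 : ℝ) < (q : ℝ) * r := by exact_mod_cast Nat.pos_of_ne_zero hm
  have hmu : (q : ℝ) * r ≤ u ^ 8 := by
    calc (q : ℝ) * r ≤ u ^ 4 * u ^ 4 := by gcongr
      _ = u ^ 8 := by ring
  set y : ℝ := (x : ℝ) / (q * r) with hy
  have hyu : u ^ 8 ≤ y := by
    rw [hy, le_div_iff₀ hmpos, ← hux]
    calc u ^ 8 * ((q : ℝ) * r) ≤ u ^ 8 * u ^ 8 := by gcongr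
      _ = u ^ 16 := by ring
  have hlog4 : 4 * Real.log u ≤ u ^ 4 := by
    have := Real.log_le_sub_one_of_pos (show 0 < u ^ 4 by positivity)
    rw [Real.log_pow] at this
    push_cast at this
    linarith
  have hz4 : (⌊u⌋₊ : ℝ) ^ 4 ≤ u ^ 4 := by gcongr
  have hz1 : (⌊u⌋₊ : ℝ) ≤ u ^ 4 := hfl.trans (le_self_pow₀ hu (by norm_num))
  have hmain : 2 * 4 * y / Real.log (⌊u⌋₊ + 1) ≤ 8 * y / Real.log u := by
    norm_num
    gcongr
  have hy0 : 0 ≤ y := le_trans (by positivity) hyu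
  -- Multiplied by `log x = 16 log u ≤ 4 u ^ 4`, the sieve error is at most `8 u ^ 8 ≤ 8 y`.
  have hA : (((Ioc 0 x).filter (fun p => p.Prime ∧ p ≡ 1 [MOD (q * r)])).card : ℝ) *
      Real.log x ≤ 136 * y := by
    calc _ ≤ (8 * y / Real.log u + u ^ 4 + u ^ 4) * Real.log x := by
          have : 0 ≤ Real.log x := by rw [hlogx]; positivity
          gcongr
          linarith
      _ = 128 * y + 2 * (u ^ 4 * (16 * Real.log u)) := by
          rw [hlogx]; field_simp; ring
      _ ≤ 128 * y + 2 * (u ^ 4 * (4 * u ^ 4)) := by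
          have h16 : 16 * Real.log u ≤ 4 * u ^ 4 := by linarith
          have := mul_le_mul_of_nonneg_left h16 (show 0 ≤ u ^ 4 by positivity)
          linarith
      _ = 128 * y + 8 * u ^ 8 := by ring
      _ ≤ 136 * y := by linarith
  have hB := le_four_mul_primeCounting_mul_log x hx
  have hlx : 0 < Real.log x := by rw [hlogx]; positivity
  refine le_of_mul_le_mul_right (hA.trans ?_) hlx
  calc 136 * y ≤ 136 * (4 * (Nat.primeCounting x * Real.log x) / (q * r)) := by
        rw [hy]; gcongr
    _ = _ := by field_simp; ring

open Finset in
/-- The reciprocals of primes in `[2 ^ i, 2 ^ (i + 1))` sum to `O(1 / i)`, since each is at most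
`log q / (i * log 2 * 2 ^ i)` and `θ(2 ^ (i + 1)) ≤ log 4 * 2 ^ (i + 1)`. -/
theorem sum_inv_primes_dyadic_le (Q : Finset ℕ) (hQ : ∀ q ∈ Q, q.Prime) (i : ℕ) (hi : 1 ≤ i) :
    ∑ q ∈ Q with Nat.log 2 q = i, (q : ℝ)⁻¹ ≤ 4 * (i : ℝ)⁻¹ := by
  have hi' : (1 : ℝ) ≤ i := by exact_mod_cast hi
  have hl2 := Real.log_pos one_lt_two
  have hc : 0 < (i : ℝ) * Real.log 2 * 2 ^ i := by positivity
  have h1 : ∀ q ∈ Q.filter (fun q => Nat.log 2 q = i),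
      (q : ℝ)⁻¹ ≤ Real.log q / (i * Real.log 2 * 2 ^ i) := by
    intro q hq
    obtain ⟨hqQ, hqi⟩ := mem_filter.1 hq
    have hp := hQ q hqQ
    have h2 : (2 : ℝ) ^ i ≤ q := by
      rw [← hqi]; exact_mod_cast Nat.pow_log_le_self 2 hp.ne_zero
    have hq0 : (0 : ℝ) < q := by exact_mod_cast hp.pos
    have h3 : i * Real.log 2 ≤ Real.log q := by
      rw [← Real.log_pow]; exact Real.log_le_log (by positivity) h2
    rw [le_div_iff₀ hc, inv_mul_le_iff₀ hq0, mul_comm (q : ℝ)]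
    gcongr
  have hth : ∑ q ∈ Q with Nat.log 2 q = i, Real.log q ≤ Real.log 4 * 2 ^ (i + 1) := by
    refine le_trans ?_ (Chebyshev.theta_le_log4_mul_x (x := 2 ^ (i + 1)) (by positivity))
    rw [Chebyshev.theta]
    refine sum_le_sum_of_subset_of_nonneg (fun q hq => ?_) fun q hq _ => ?_
    · obtain ⟨hqQ, hqi⟩ := mem_filter.1 hq
      have hp := hQ q hqQ
      refine mem_filter.2 ⟨mem_Ioc.2 ⟨hp.pos, ?_⟩, hp⟩
      rw [Nat.le_floor_iff (by positivity)]
      have := Nat.lt_pow_succ_log_self (b := 2) (by norm_num) q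
      rw [hqi] at this
      exact_mod_cast this.le
    · exact Real.log_natCast_nonneg q
  calc _ ≤ ∑ q ∈ Q with Nat.log 2 q = i, Real.log q / (i * Real.log 2 * 2 ^ i) := sum_le_sum h1
    _ = (∑ q ∈ Q with Nat.log 2 q = i, Real.log q) / (i * Real.log 2 * 2 ^ i) := by
        rw [sum_div]
    _ ≤ Real.log 4 * 2 ^ (i + 1) / (i * Real.log 2 * 2 ^ i) := by gcongr
    _ = 4 * (i : ℝ)⁻¹ := by
        rw [show (4 : ℝ) = 2 ^ 2 by norm_num, Real.log_pow]
        push_cast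
        field_simp
        ring

open Finset in
/-- The upper half of Mertens's second theorem, up to constants: the reciprocals of primes below `T`
sum to `O(log log T)`. The primes are split by the integer part of their binary logarithm. -/
theorem sum_inv_primes_le (Q : Finset ℕ) (T : ℝ) (hT : 1 ≤ Real.log T)
    (hQ : ∀ q ∈ Q, q.Prime ∧ (q : ℝ) < T) :
    ∑ q ∈ Q, (q : ℝ)⁻¹ ≤ 8 + 4 * Real.log (Real.log T) := by
  have hl2 := Real.log_two_gt_d9
  have hl2' := Real.log_two_lt_d9
  set K := ⌊Real.log T / Real.log 2⌋₊ with hK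
  have hmap : ∀ q ∈ Q, Nat.log 2 q ∈ Icc 1 K := by
    intro q hq
    obtain ⟨hp, hqT⟩ := hQ q hq
    refine mem_Icc.2 ⟨Nat.log_pos (by norm_num) hp.two_le, ?_⟩
    rw [hK, Nat.le_floor_iff (by positivity), le_div_iff₀ (by linarith), ← Real.log_pow]
    refine Real.log_le_log (by positivity) (le_trans ?_ hqT.le)
    exact_mod_cast Nat.pow_log_le_self 2 hp.ne_zero
  rw [← sum_fiberwise_of_maps_to hmap]
  have hK1 : 1 ≤ K := by
    rw [hK, Nat.one_le_floor_iff, le_div_iff₀ (by linarith)]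
    linarith
  have hlogK : Real.log K ≤ Real.log (Real.log T) + 1 := by
    have h1 : (K : ℝ) ≤ Real.log T / Real.log 2 := Nat.floor_le (by positivity)
    have h2 : (K : ℝ) ≤ Real.log T * Real.exp 1 := by
      refine h1.trans ?_
      rw [div_le_iff₀ (by linarith), mul_assoc]
      have : (1 : ℝ) ≤ Real.exp 1 * Real.log 2 := by
        have := Real.add_one_le_exp 1
        nlinarith
      nlinarith
    have := Real.log_le_log (by exact_mod_cast hK1) h2
    rwa [Real.log_mul (by linarith) (Real.exp_ne_zero _), Real.log_exp] at this
  calc _ ≤ ∑ i ∈ Icc 1 K, 4 * (i : ℝ)⁻¹ := sum_le_sum fun i hi =>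
        sum_inv_primes_dyadic_le Q (fun q hq => (hQ q hq).1) i (mem_Icc.1 hi).1
    _ = 4 * ∑ i ∈ Icc 1 K, (i : ℝ)⁻¹ := by rw [mul_sum]
    _ ≤ 4 * (1 + Real.log K) := by
        have := harmonic_le_one_add_log K
        rw [harmonic_eq_sum_Icc] at this
        push_cast at this
        gcongr
    _ ≤ _ := by linarith

/-! ### Shifted primes with many small prime factors -/

open Finset in
/-- Second moment bound. Each prime `p` counted on the left gives at least `B ^ 2 - B ≥ B ^ 2 / 2`
ordered pairs of distinct primes `q, r < U` with `q * r ∣ p - 1`, and for a given pair the number of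
such `p` is bounded by `card_primes_modEq_mul_le`. Here `u = x ^ (1 / 16)`, so `U ≤ x ^ (1 / 4)`. -/
theorem second_moment (x : ℕ) (u : ℝ) (hx : 16 ≤ x) (hu : 1 ≤ u) (hux : u ^ 16 = x)
    (U B : ℝ) (hU : U ≤ u ^ 4) (hB : 2 ≤ B) :
    (((Ioc 0 x).filter (fun p => p.Prime ∧ B ≤ omegaLt (p - 1) U)).card : ℝ) * (B ^ 2 / 2) ≤
      544 * Nat.primeCounting x *
        (∑ q ∈ (Ioc 0 x).filter (fun q : ℕ => q.Prime ∧ (q : ℝ) < U), (q : ℝ)⁻¹) ^ 2 := by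
  classical
  set Q := (Ioc 0 x).filter (fun q : ℕ => q.Prime ∧ (q : ℝ) < U) with hQ
  set E := (Ioc 0 x).filter (fun p => p.Prime ∧ B ≤ omegaLt (p - 1) U) with hE
  have hlow : ∀ p ∈ E, B ^ 2 / 2 ≤
      ((Q.offDiag.filter (fun t => p ≡ 1 [MOD (t.1 * t.2)])).card : ℝ) := by
    intro p hp
    obtain ⟨hpx, hpp, hpB⟩ := mem_filter.1 hp
    set F := (p - 1).primeFactors.filter (fun q : ℕ => (q : ℝ) < U) with hF
    have hsub : F.offDiag ⊆ Q.offDiag.filter (fun t => p ≡ 1 [MOD (t.1 * t.2)]) := by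
      intro t ht
      obtain ⟨h1, h2, h3⟩ := mem_offDiag.1 ht
      have hmem : ∀ q ∈ F, q.Prime ∧ q ∣ p - 1 ∧ q ∈ Q := by
        intro q hq
        obtain ⟨hq1, hq2⟩ := mem_filter.1 hq
        obtain ⟨hq3, hq4, hq5⟩ := Nat.mem_primeFactors.1 hq1
        refine ⟨hq3, hq4, mem_filter.2 ⟨mem_Ioc.2 ⟨hq3.pos, ?_⟩, hq3, hq2⟩⟩
        have := Nat.le_of_dvd (Nat.pos_of_ne_zero hq5) hq4
        have := (mem_Ioc.1 hpx).2
        omega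
      obtain ⟨a1, a2, a3⟩ := hmem _ h1
      obtain ⟨b1, b2, b3⟩ := hmem _ h2
      refine mem_filter.2 ⟨mem_offDiag.2 ⟨a3, b3, h3⟩, ?_⟩
      have hdvd := Nat.Coprime.mul_dvd_of_dvd_of_dvd ((Nat.coprime_primes a1 b1).2 h3) a2 b2
      exact ((Nat.modEq_iff_dvd' hpp.one_le).2 hdvd).symm
    have hcard := card_le_card hsub
    rw [offDiag_card] at hcard
    have hBF : B ≤ (F.card : ℝ) := hpB
    have hle : F.card ≤ F.card * F.card := Nat.le_mul_self _
    have : ((F.card * F.card - F.card : ℕ) : ℝ) ≤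
        ((Q.offDiag.filter (fun t => p ≡ 1 [MOD (t.1 * t.2)])).card : ℝ) := by
      exact_mod_cast hcard
    rw [Nat.cast_sub hle] at this
    push_cast at this
    nlinarith
  calc (E.card : ℝ) * (B ^ 2 / 2) = ∑ p ∈ E, B ^ 2 / 2 := by simp
    _ ≤ ∑ p ∈ E, ((Q.offDiag.filter (fun t => p ≡ 1 [MOD (t.1 * t.2)])).card : ℝ) :=
        sum_le_sum hlow
    _ = ∑ t ∈ Q.offDiag, ((E.filter (fun p => p ≡ 1 [MOD (t.1 * t.2)])).card : ℝ) := by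
        have := sum_card_bipartiteAbove_eq_sum_card_bipartiteBelow (s := E) (t := Q.offDiag)
          (fun p t => p ≡ 1 [MOD (t.1 * t.2)])
        simp only [bipartiteAbove, bipartiteBelow] at this
        exact_mod_cast this
    _ ≤ ∑ t ∈ Q.offDiag, 544 * Nat.primeCounting x * ((t.1 : ℝ)⁻¹ * (t.2 : ℝ)⁻¹) := by
        refine sum_le_sum fun t ht => ?_
        obtain ⟨h1, h2, h3⟩ := mem_offDiag.1 ht
        obtain ⟨-, a1, a2⟩ := mem_filter.1 h1
        obtain ⟨-, b1, b2⟩ := mem_filter.1 h2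
        refine le_trans ?_ (card_primes_modEq_mul_le x u hx hu hux t.1 t.2 a1 b1 h3
          (a2.le.trans hU) (b2.le.trans hU))
        have : E.filter (fun p => p ≡ 1 [MOD (t.1 * t.2)]) ⊆
            (Ioc 0 x).filter (fun p => p.Prime ∧ p ≡ 1 [MOD (t.1 * t.2)]) := by
          intro p hp
          obtain ⟨c1, c2⟩ := mem_filter.1 hp
          obtain ⟨c3, c4, -⟩ := mem_filter.1 c1
          exact mem_filter.2 ⟨c3, c4, c2⟩
        exact_mod_cast card_le_card this
    _ ≤ ∑ t ∈ Q ×ˢ Q, 544 * Nat.primeCounting x * ((t.1 : ℝ)⁻¹ * (t.2 : ℝ)⁻¹) := by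
        refine sum_le_sum_of_subset_of_nonneg (fun t ht => ?_) fun _ _ _ => by positivity
        obtain ⟨h1, h2, -⟩ := mem_offDiag.1 ht
        exact mem_product.2 ⟨h1, h2⟩
    _ = _ := by rw [← mul_sum, sq, sum_mul_sum, ← sum_product']

open Finset in
/-- Truncation at `u ^ 4 = x ^ (1 / 4)` loses at most three prime factors: four distinct primes
`≥ x ^ (1 / 4)` have product at least `x > n`. -/
theorem omegaLt_le_omegaLt_min_add_three (n x : ℕ) (u t T : ℝ) (hn : 0 < n) (hnx : n < x)
    (hu : 1 ≤ u) (hux : u ^ 16 = x) (htT : t ≤ T) :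
    omegaLt n t ≤ omegaLt n (min T (u ^ 4)) + 3 := by
  classical
  unfold omegaLt
  set G := n.primeFactors.filter (fun q : ℕ => u ^ 4 ≤ (q : ℝ)) with hG
  have hsub : n.primeFactors.filter (fun q : ℕ => (q : ℝ) < t) ⊆
      n.primeFactors.filter (fun q : ℕ => (q : ℝ) < min T (u ^ 4)) ∪ G := by
    intro q hq
    obtain ⟨h1, h2⟩ := mem_filter.1 hq
    rw [mem_union]
    by_cases h : u ^ 4 ≤ (q : ℝ)
    · exact Or.inr (mem_filter.2 ⟨h1, h⟩)
    · exact Or.inl (mem_filter.2 ⟨h1, lt_min (h2.trans_le htT) (not_le.1 h)⟩)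
  have hG3 : G.card ≤ 3 := by
    by_contra hcon
    have h1 : ∏ q ∈ G, q ≤ n := Nat.le_of_dvd hn
      ((prod_dvd_prod_of_subset _ _ _ (filter_subset _ _)).trans n.prod_primeFactors_dvd)
    have h2 : (u ^ 4) ^ G.card ≤ ∏ q ∈ G, (q : ℝ) := by
      rw [← prod_const]
      exact prod_le_prod (fun _ _ => by positivity) fun q hq => (mem_filter.1 hq).2
    have h3 : (x : ℝ) ≤ (u ^ 4) ^ G.card := by
      rw [← hux, ← pow_mul]
      exact pow_le_pow_right₀ hu (by omega)
    have h4 : ∏ q ∈ G, (q : ℝ) ≤ n := by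
      rw [← Nat.cast_prod]; exact_mod_cast h1
    have h5 : (n : ℝ) < x := by exact_mod_cast hnx
    linarith
  exact ((card_le_card hsub).trans (card_union_le _ _)).trans (by omega)

/-! ### Dyadic decomposition in the iterated logarithm -/

theorem stmt13 :
    ∃ C : ℝ, 0 < C ∧ ∃ a₀ : ℝ, ∀ a : ℝ, a₀ ≤ a → ∃ x₀ : ℕ, ∀ x : ℕ, x₀ ≤ x →
      ({p : ℕ | p ≤ x ∧ p.Prime ∧ ∃ t : ℝ, a < t ∧ t < (p : ℝ) - 1 ∧
          2 * (max 1 (Real.log (Real.log t))) ^ 2 ≤ (omegaLt (p - 1) t : ℝ)}.ncard : ℝ) ≤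
        C * ({p : ℕ | p ≤ x ∧ p.Prime}.ncard : ℝ) /
          (max 1 (Real.log (Real.log a))) ^ 2 := by
  classical
  -- `2000000` exceeds `278528 * (16 / 3)`: the first factor is the constant of each block, the second
  -- comes from summing over blocks. The choice of `a₀` gives `log log a ≥ 4`, so the convention
  -- `max 1` is inactive, and blocks start at `J ≥ 2`.
  refine ⟨2000000, by norm_num, Real.exp (Real.exp 4), fun a ha => ⟨16, fun x hx => ?_⟩⟩
  have hx' : (16 : ℝ) ≤ x := by exact_mod_cast hx
  obtain ⟨u, hu, hux⟩ : ∃ u : ℝ, 1 ≤ u ∧ u ^ 16 = x :=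
    ⟨(x : ℝ) ^ (1 / 16 : ℝ), Real.one_le_rpow (by linarith) (by norm_num), by
      rw [← Real.rpow_natCast, ← Real.rpow_mul (by linarith)]; norm_num⟩
  have hπ : {p : ℕ | p ≤ x ∧ p.Prime}.ncard = Nat.primeCounting x := by
    rw [← Nat.primesLE_card_eq_primeCounting, ← Set.ncard_coe_finset]
    congr 1
    ext p
    simp [Nat.mem_primesLE]
  rw [hπ]
  have hloga : Real.exp 4 ≤ Real.log a := by
    rw [Real.le_log_iff_exp_le ((Real.exp_pos _).trans_le ha)]; exact ha
  have hlla : 4 ≤ Real.log (Real.log a) := by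
    rw [Real.le_log_iff_exp_le ((Real.exp_pos _).trans_le hloga)]; exact hloga
  set L := Real.log (Real.log a) with hL
  rw [max_eq_right (by linarith)]
  obtain ⟨J, hJ1, hJ2⟩ := exists_nat_pow_near (show (1 : ℝ) ≤ L by linarith) one_lt_two
  have hJ : 2 ≤ J := by
    by_contra hcon
    have : (2 : ℝ) ^ (J + 1) ≤ 2 ^ 2 := pow_le_pow_right₀ (by norm_num) (by omega)
    norm_num at this
    linarith
  -- `log (log (T j)) = 2 ^ (j + 1)`, so `T j` bounds all `t` with `2 ^ j ≤ log log t < 2 ^ (j + 1)`.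
  let T : ℕ → ℝ := fun j => Real.exp (Real.exp (2 ^ (j + 1)))
  let E : ℕ → Finset ℕ := fun j => (Finset.Ioc 0 x).filter
    (fun p => p.Prime ∧ (4 : ℝ) ^ j ≤ omegaLt (p - 1) (min (T j) (u ^ 4)))
  have hsub : {p : ℕ | p ≤ x ∧ p.Prime ∧ ∃ t : ℝ, a < t ∧ t < (p : ℝ) - 1 ∧
      2 * (max 1 (Real.log (Real.log t))) ^ 2 ≤ (omegaLt (p - 1) t : ℝ)} ⊆
      (((Finset.Ico J (x + 1)).biUnion E : Finset ℕ) : Set ℕ) := by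
    rintro p ⟨hpx, hpp, t, hat, htp, hω⟩
    have hlogt : Real.log a ≤ Real.log t :=
      Real.log_le_log ((Real.exp_pos _).trans_le ha) hat.le
    have hlogt0 : 0 < Real.log t := ((Real.exp_pos _).trans_le hloga).trans_le hlogt
    have ht0 : 0 < t := ((Real.exp_pos _).trans_le ha).trans hat
    have hllt : L ≤ Real.log (Real.log t) :=
      Real.log_le_log ((Real.exp_pos _).trans_le hloga) hlogt
    set M := Real.log (Real.log t) with hM
    rw [max_eq_right (by linarith)] at hω
    obtain ⟨j, hj1, hj2⟩ := exists_nat_pow_near (show (1 : ℝ) ≤ M by linarith) one_lt_two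
    have hJj : J ≤ j := by
      have : (2 : ℝ) ^ J < 2 ^ (j + 1) := by linarith
      have := (pow_lt_pow_iff_right₀ (one_lt_two (α := ℝ))).1 this
      omega
    have hpx' : (p : ℝ) ≤ x := by exact_mod_cast hpx
    -- As `2 ^ j ≤ log log t ≤ t < x`, only blocks with `j ≤ x` occur.
    have hjx : j < x + 1 := by
      have h1 : M ≤ Real.log t := Real.log_le_self hlogt0.le
      have h2 : Real.log t ≤ t := Real.log_le_self ht0.le
      have h3 : (j : ℝ) < 2 ^ j := by exact_mod_cast Nat.lt_two_pow_self
      have : (j : ℝ) < x := by linarith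
      have : j < x := by exact_mod_cast this
      omega
    have htT : t ≤ T j := by
      rw [← Real.log_le_iff_le_exp ht0, ← Real.log_le_iff_le_exp hlogt0]
      exact hj2.le
    have hnat := omegaLt_le_omegaLt_min_add_three (p - 1) x u t (T j)
      (by have := hpp.two_le; omega) (by have := hpp.two_le; omega) hu hux htT
    have hnat' : (omegaLt (p - 1) t : ℝ) ≤ omegaLt (p - 1) (min (T j) (u ^ 4)) + 3 := by
      exact_mod_cast hnat
    have h4 : (4 : ℝ) ^ j ≤ M ^ 2 := by
      calc (4 : ℝ) ^ j = (2 ^ j) ^ 2 := by rw [← pow_mul, mul_comm, pow_mul]; norm_num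
        _ ≤ M ^ 2 := by gcongr
    have h16 : (4 : ℝ) ^ 2 ≤ 4 ^ j := pow_le_pow_right₀ (by norm_num) (by omega)
    simp only [Finset.coe_biUnion, Set.mem_iUnion, Finset.mem_coe, Finset.mem_Ico, E,
      Finset.mem_filter, Finset.mem_Ioc]
    refine ⟨j, ⟨hJj, hjx⟩, ⟨hpp.pos, hpx⟩, hpp, ?_⟩
    -- `2 * (log log t) ^ 2 - 3 ≥ 2 * 4 ^ j - 3 ≥ 4 ^ j`
    linarith
  have hE : ∀ j ∈ Finset.Ico J (x + 1),
      ((E j).card : ℝ) ≤ 278528 * Nat.primeCounting x * (1 / 4) ^ j := by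
    intro j hj
    have hJj := (Finset.mem_Ico.1 hj).1
    have h16 : (4 : ℝ) ^ 2 ≤ 4 ^ j := pow_le_pow_right₀ (by norm_num) (by omega)
    have h2j : (2 : ℝ) ^ 2 ≤ 2 ^ j := pow_le_pow_right₀ (by norm_num) (by omega)
    have hsm := second_moment x u hx hu hux (min (T j) (u ^ 4)) (4 ^ j) (min_le_right _ _)
      (by linarith)
    have hrec := sum_inv_primes_le
      ((Finset.Ioc 0 x).filter (fun q : ℕ => q.Prime ∧ (q : ℝ) < min (T j) (u ^ 4))) (T j)
      (by
        simp only [T, Real.log_exp]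
        exact Real.one_le_exp (by positivity))
      (fun q hq => ⟨(Finset.mem_filter.1 hq).2.1,
        (Finset.mem_filter.1 hq).2.2.trans_le (min_le_left _ _)⟩)
    simp only [T, Real.log_exp] at hrec
    set R := ∑ q ∈ (Finset.Ioc 0 x).filter
      (fun q : ℕ => q.Prime ∧ (q : ℝ) < min (T j) (u ^ 4)), (q : ℝ)⁻¹ with hR
    have hR0 : 0 ≤ R := Finset.sum_nonneg fun _ _ => by positivity
    -- `8 + 4 * 2 ^ (j + 1) ≤ 16 * 2 ^ j`
    have hR1 : R ≤ 16 * 2 ^ j := by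
      refine hrec.trans ?_
      rw [pow_succ]
      linarith
    have hR2 : R ^ 2 ≤ 256 * 4 ^ j := by
      calc R ^ 2 ≤ (16 * 2 ^ j) ^ 2 := by gcongr
        _ = 256 * 4 ^ j := by
          rw [mul_pow, ← pow_mul, mul_comm j, pow_mul]; norm_num
    have hpos : (0 : ℝ) < (4 ^ j) ^ 2 / 2 := by positivity
    refine le_of_mul_le_mul_right (hsm.trans ?_) hpos
    -- `544 * 256 * 2 = 278528`
    calc 544 * Nat.primeCounting x * R ^ 2
        ≤ 544 * Nat.primeCounting x * (256 * 4 ^ j) := by gcongr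
      _ = _ := by
        rw [one_div, inv_pow]; field_simp; ring
  have hgeom : ∑ j ∈ Finset.Ico J (x + 1), (1 / 4 : ℝ) ^ j ≤ 16 / 3 / L ^ 2 := by
    refine (geom_sum_Ico_le_of_lt_one (by norm_num) (by norm_num)).trans ?_
    have h1 : L ^ 2 ≤ 4 * 4 ^ J := by
      calc L ^ 2 ≤ (2 ^ (J + 1)) ^ 2 := by gcongr
        _ = 4 * 4 ^ J := by rw [← pow_mul, mul_comm, pow_mul]; norm_num; ring
    have h2 : 0 < L ^ 2 := by positivity
    rw [one_div, inv_pow, div_le_div_iff₀ (by norm_num) h2, inv_mul_le_iff₀ (by positivity)]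
    linarith
  have h0 : (0 : ℝ) ≤ Nat.primeCounting x := Nat.cast_nonneg _
  calc _ ≤ (((Finset.Ico J (x + 1)).biUnion E).card : ℝ) := by
        rw [← Set.ncard_coe_finset]
        exact_mod_cast Set.ncard_le_ncard hsub (Finset.finite_toSet _)
    _ ≤ ∑ j ∈ Finset.Ico J (x + 1), ((E j).card : ℝ) := by exact_mod_cast Finset.card_biUnion_le
    _ ≤ ∑ j ∈ Finset.Ico J (x + 1), 278528 * Nat.primeCounting x * (1 / 4 : ℝ) ^ j :=
        Finset.sum_le_sum hE
    _ = 278528 * Nat.primeCounting x * ∑ j ∈ Finset.Ico J (x + 1), (1 / 4 : ℝ) ^ j := by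
        rw [Finset.mul_sum]
    _ ≤ 278528 * Nat.primeCounting x * (16 / 3 / L ^ 2) := by gcongr
    _ = (278528 * (16 / 3)) * Nat.primeCounting x / L ^ 2 := by ring
    _ ≤ 2000000 * Nat.primeCounting x / L ^ 2 := by gcongr; norm_num
end
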